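/- arXiv:2208.00157 — 4 statements merged into one kernel-verified Lean document; each statement's English description precedes it below -/
import Mathlib

section
/- For every base b ≥ 2 and x ∈ [0,1), dim_FS(seq_b(x)) ≤ dim_FS^b(x), i.e., the finite-state dimension of the base-b expansion of x is at most the base-b finite-state dimension of x defined via information content at precisions. -/
open Filter Set
open scoped ENNReal

/-- A finite-state transducer over alphabet `A`, with states `Fin n`. -/
structure FST (A : Type) where
  n : ℕ
  tr : Fin n → A → Fin n
  out1 : Fin n → A → List A
  q0 : Fin n

/-- Extension of the transition function to strings. -/
def FST.deltaS {A : Type} (T : FST A) : Fin T.n → List A → Fin T.n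
  | q, [] => q
  | q, a :: w => T.deltaS (T.tr q a) w

/-- Extension of the output function to strings. -/
def FST.nuS {A : Type} (T : FST A) : Fin T.n → List A → List A
  | _, [] => []
  | q, a :: w => T.out1 q a ++ T.nuS (T.tr q a) w

/-- The output of `T` on input `w`. -/
def FST.out {A : Type} (T : FST A) (w : List A) : List A := T.nuS T.q0 w

/-- `T`-information content of a string: shortest input producing it (`⊤` if none). -/
noncomputable def Kfst {A : Type} (T : FST A) (w : List A) : ℕ∞ :=
  sInf {k : ℕ∞ | ∃ π : List A, T.out π = w ∧ (π.length : ℕ∞) = k}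

/-- The real number in `[0,1)` with finite base-`b` expansion `w`. -/
noncomputable def realb (b : ℕ) (w : List (Fin b)) : ℝ :=
  ∑ i : Fin w.length, (w.get i : ℝ) / (b : ℝ) ^ (i.1 + 1)

/-- The real number with base-`b` expansion `S`. -/
noncomputable def realSeq (b : ℕ) (S : ℕ → Fin b) : ℝ :=
  ∑' i : ℕ, (S i : ℝ) / (b : ℝ) ^ (i + 1)

/-- The length-`n` prefix of a sequence, as a string. -/
def pre {A : Type} (S : ℕ → A) (n : ℕ) : List A := List.ofFn (fun i : Fin n => S i.1)

/-- Base-`b` `T`-information content of `x` at precision `δ`. -/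
noncomputable def Kprec (b : ℕ) (T : FST (Fin b)) (δ : ℝ) (x : ℝ) : ℕ∞ :=
  sInf {k : ℕ∞ | ∃ w : List (Fin b), |realb b w - x| < δ ∧ Kfst T w = k}

/-- Base-`b` finite-state dimension of a point of `[0,1)`. -/
noncomputable def dimFSb (b : ℕ) (x : ℝ) : ℝ≥0∞ :=
  ⨅ T : FST (Fin b),
    Filter.liminf (fun δ : ℝ =>
      (Kprec b T δ x : ℝ≥0∞) / ENNReal.ofReal (Real.logb b (1/δ)))
      (nhdsWithin 0 (Set.Ioi 0))

/-- Base-`b` finite-state dimension of a subset of `[0,1)`. -/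
noncomputable def dimFSbSet (b : ℕ) (A : Set ℝ) : ℝ≥0∞ :=
  ⨅ T : FST (Fin b), ⨆ x ∈ A,
    Filter.liminf (fun δ : ℝ =>
      (Kprec b T δ x : ℝ≥0∞) / ENNReal.ofReal (Real.logb b (1/δ)))
      (nhdsWithin 0 (Set.Ioi 0))

/-- Finite-state dimension of a sequence (Doty–Moser characterization). -/
noncomputable def dimFSseq {A : Type} (S : ℕ → A) : ℝ≥0∞ :=
  ⨅ T : FST A,
    Filter.liminf (fun n : ℕ => (Kfst T (pre S n) : ℝ≥0∞) / (n : ℝ≥0∞)) Filter.atTop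

/-- Finite-state dimension of a set of sequences. -/
noncomputable def dimFSseqSet {A : Type} (X : Set (ℕ → A)) : ℝ≥0∞ :=
  ⨅ T : FST A, ⨆ S ∈ X,
    Filter.liminf (fun n : ℕ => (Kfst T (pre S n) : ℝ≥0∞) / (n : ℝ≥0∞)) Filter.atTop

/-- digit complement of a sequence -/
def compSeq (b : ℕ) (S : ℕ → Fin b) : ℕ → Fin b :=
  fun i => ⟨b - 1 - (S i : ℕ), by have := (S i).isLt; omega⟩

/-- `S` ends with infinitely many digits `b-1`. -/
def endsBm1 (b : ℕ) (S : ℕ → Fin b) : Prop := ∃ N, ∀ i ≥ N, (S i : ℕ) = b - 1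

/-- A separator enumerator: a map into `[0,1)` with dense image in `[0,1]`. -/
def isSE {A : Type} (f : List A → ℝ) : Prop :=
  (∀ w, f w ∈ Set.Ico (0:ℝ) 1) ∧ ∀ y ∈ Set.Icc (0:ℝ) 1, y ∈ closure (Set.range f)

/-- `f`-`T`-information content of `x` at precision `δ`. -/
noncomputable def KprecF {A : Type} (T : FST A) (f : List A → ℝ) (δ : ℝ) (x : ℝ) : ℕ∞ :=
  sInf {k : ℕ∞ | ∃ w : List A, |f w - x| < δ ∧ Kfst T w = k}

/-- `f`-enumerator finite-state dimension of a point. -/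
noncomputable def dimFSf {A : Type} [Fintype A] (f : List A → ℝ) (x : ℝ) : ℝ≥0∞ :=
  ⨅ T : FST A,
    Filter.liminf (fun δ : ℝ =>
      (KprecF T f δ x : ℝ≥0∞) / ENNReal.ofReal (Real.logb (Fintype.card A) (1/δ)))
      (nhdsWithin 0 (Set.Ioi 0))

/-- `f`-enumerator finite-state dimension of a set. -/
noncomputable def dimFSfSet {A : Type} [Fintype A] (f : List A → ℝ) (E : Set ℝ) : ℝ≥0∞ :=
  ⨅ T : FST A, ⨆ x ∈ E,
    Filter.liminf (fun δ : ℝ =>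
      (KprecF T f δ x : ℝ≥0∞) / ENNReal.ofReal (Real.logb (Fintype.card A) (1/δ)))
      (nhdsWithin 0 (Set.Ioi 0))

open scoped Classical in
/-- Number of occurrences of `w` among the first `N` positions of `S`. -/
noncomputable def occCount {b : ℕ} (S : ℕ → Fin b) (w : List (Fin b)) (N : ℕ) : ℕ :=
  (Finset.range N).filter (fun i => ∀ j : Fin w.length, S (i + j.1) = w.get j) |>.card


namespace DimAux

/-! Generic machines -/

def runO {Q E A : Type} (st : Q → E → Q) (o : Q → E → List A) : Q → List E → List A
  | _, [] => []
  | q, e :: es => o q e ++ runO st o (st q e) es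

def stC {Q E A : Type} (st : Q → E → Q) : Q → (Option Bool × E) ⊕ A → Q
  | q, Sum.inl (_, e) => st q e
  | q, Sum.inr _ => q

def oC {Q E A : Type} (o : Q → E → List A) (g : A → A) :
    Q → (Option Bool × E) ⊕ A → List A
  | q, Sum.inl (some true, e) => o q e
  | q, Sum.inl (some false, e) => (o q e).map g
  | _, Sum.inl (none, _) => []
  | _, Sum.inr a => [a]

theorem runO_lits {Q E A : Type} (st : Q → E → Q) (o : Q → E → List A) (g : A → A) (q : Q)
    (l : List A) (cs : List ((Option Bool × E) ⊕ A)) :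
    runO (stC st) (oC o g) q (l.map Sum.inr ++ cs) = l ++ runO (stC st) (oC o g) q cs := by
  induction l with
  | nil => rfl
  | cons a l ih => simp [runO, stC, oC, ih]

theorem lemG {Q E A : Type} (st : Q → E → Q) (o : Q → E → List A) (g : A → A)
    (L : ℕ) (hL : ∀ q e, (o q e).length ≤ L) (S W : ℕ → A) (n t : ℕ)
    (h1 : ∀ i < n, i < t → S i = W i) (h2 : ∀ i < n, t < i → S i = g (W i))
    (es : List E) : ∀ (q : Q) (i : ℕ), i ≤ n → n ≤ i + (runO st o q es).length →
      runO st o q es = (List.range' i (runO st o q es).length).map W →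
      ∃ cs, runO (stC st) (oC o g) q cs = (List.range' i (n - i)).map S ∧
        cs.length ≤ es.length + L + (if i ≤ t then L + 1 else 0) := by
  induction es with
  | nil =>
    intro q i hi hn _
    have : n - i = 0 := by simp [runO] at hn; omega
    exact ⟨[], by simp [this, runO], by simp⟩
  | cons e es ih =>
    intro q i hi hn hW
    simp only [runO, List.length_append] at hn hW
    rw [← List.range'_append_1, List.map_append] at hW
    obtain ⟨hW1, hW2⟩ := List.append_inj hW (by simp)
    have hLe := hL q e
    set len := (o q e).length with hlen
    by_cases hc : n < i + len
    · refine ⟨((List.range' i (n - i)).map S).map Sum.inr, ?_, ?_⟩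
      · have := runO_lits st o g q ((List.range' i (n - i)).map S) []
        simpa [runO] using this
      · simp; omega
    push Not at hc
    obtain ⟨cs, hcs, hcl⟩ := ih (st q e) (i + len) hc (by omega) hW2
    have hsplit : (List.range' i (n - i)).map S =
        (List.range' i len).map S ++ (List.range' (i + len) (n - (i + len))).map S := by
      rw [← List.map_append, List.range'_append_1]
      congr 2; omega
    rw [hsplit, ← hcs]
    by_cases ht : i + len ≤ t
    · refine ⟨Sum.inl (some true, e) :: cs, ?_, ?_⟩
      · simp only [runO, stC, oC]
        congr 1
        rw [hW1]
        apply List.map_congr_left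
        intro j hj
        simp at hj
        exact (h1 j (by omega) (by omega)).symm
      · have : i ≤ t := by omega
        simp [this, ht] at hcl ⊢; omega
    rw [if_neg ht] at hcl
    by_cases hi2 : t < i
    · refine ⟨Sum.inl (some false, e) :: cs, ?_, ?_⟩
      · simp only [runO, stC, oC]
        congr 1
        rw [hW1, List.map_map]
        apply List.map_congr_left
        intro j hj
        simp at hj
        exact (h2 j (by omega) (by omega)).symm
      · simp; omega
    · refine ⟨Sum.inl (none, e) :: (((List.range' i len).map S).map Sum.inr ++ cs), ?_, ?_⟩
      · simp only [runO, stC, oC, runO_lits, List.nil_append]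
      · have : i ≤ t := by omega
        simp [this]; omega

/-! Block coding -/

theorem lemBlock {Q C A : Type} [Finite Q] [Fintype C] [Nonempty C] [Fintype A] (B : ℕ) (hB : 1 ≤ B)
    (hcard : Fintype.card C ≤ Fintype.card A ^ B)
    (st : Q → C → Q) (o : Q → C → List A) (q0 : Q) :
    ∃ T : FST A, ∀ cs : List C, ∃ π : List A, π.length = B * cs.length ∧
      T.out π = runO st o q0 cs := by
  classical
  obtain ⟨enc, dec, henc, hdec⟩ : ∃ (enc : C → List A) (dec : List A → C),
      (∀ c, (enc c).length = B) ∧ ∀ c, dec (enc c) = c := by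
    have : Nonempty (C ↪ (Fin B → A)) := by
      apply Function.Embedding.nonempty_of_card_le
      simpa using hcard
    obtain ⟨f⟩ := this
    have hinj : Function.Injective (fun c => List.ofFn (f c)) :=
      List.ofFn_injective.comp f.injective
    exact ⟨fun c => List.ofFn (f c), Function.invFun (fun c => List.ofFn (f c)), by simp,
      Function.leftInverse_invFun hinj⟩
  have : Finite {l : List A // l.length < B} := (List.finite_length_lt A B).to_subtype
  obtain ⟨N, ⟨e⟩⟩ := Finite.exists_equiv_fin (Q × {l : List A // l.length < B})
  let T : FST A :=
    { n := N
      tr := fun s a => e (if h : ((e.symm s).2.1 ++ [a]).length < B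
        then ((e.symm s).1, ⟨(e.symm s).2.1 ++ [a], h⟩)
        else (st (e.symm s).1 (dec ((e.symm s).2.1 ++ [a])), ⟨[], hB⟩))
      out1 := fun s a => if ((e.symm s).2.1 ++ [a]).length < B then []
        else o (e.symm s).1 (dec ((e.symm s).2.1 ++ [a]))
      q0 := e (q0, ⟨[], hB⟩) }
  have key : ∀ (r l : List A) (hl : l.length < B) (q : Q) (rest : List A),
      l.length + r.length = B →
      T.nuS (e (q, ⟨l, hl⟩)) (r ++ rest) =
        o q (dec (l ++ r)) ++ T.nuS (e (st q (dec (l ++ r)), ⟨[], hB⟩)) rest := by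
    intro r
    induction r with
    | nil => intro l hl q rest h; simp at h; omega
    | cons a r ih =>
      intro l hl q rest h
      simp only [List.length_cons] at h
      rw [List.cons_append, FST.nuS]
      by_cases hlt : (l ++ [a]).length < B
      · have e1 : T.out1 (e (q, ⟨l, hl⟩)) a = [] := by
          simp only [T, Equiv.symm_apply_apply]; rw [if_pos hlt]
        have e2 : T.tr (e (q, ⟨l, hl⟩)) a = e (q, ⟨l ++ [a], hlt⟩) := by
          simp only [T, Equiv.symm_apply_apply]; rw [dif_pos hlt]
        rw [e1, e2, ih (l ++ [a]) hlt q rest (by simp; omega)]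
        simp
      · have e1 : T.out1 (e (q, ⟨l, hl⟩)) a = o q (dec (l ++ [a])) := by
          simp only [T, Equiv.symm_apply_apply]; rw [if_neg hlt]
        have e2 : T.tr (e (q, ⟨l, hl⟩)) a = e (st q (dec (l ++ [a])), ⟨[], hB⟩) := by
          simp only [T, Equiv.symm_apply_apply]; rw [dif_neg hlt]
        have : r = [] := by
          apply List.eq_nil_of_length_eq_zero
          simp at hlt; omega
        subst this
        rw [e1, e2]; simp
  refine ⟨T, ?_⟩
  have main : ∀ (cs : List C) (q : Q), ∃ π : List A, π.length = B * cs.length ∧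
      T.nuS (e (q, ⟨[], hB⟩)) π = runO st o q cs := by
    intro cs
    induction cs with
    | nil => intro q; exact ⟨[], by simp, rfl⟩
    | cons c cs ih =>
      intro q
      obtain ⟨π, h1, h2⟩ := ih (st q c)
      refine ⟨enc c ++ π, by simp [henc, h1]; ring, ?_⟩
      rw [key (enc c) [] hB q π (by simp [henc])]
      simp [hdec, h2, runO]
  exact fun cs => main cs q0

/-! The block machine simulating `T`. -/

def stE {A : Type} (T : FST A) (m : ℕ) : Fin T.n → (Fin m → A) ⊕ (A ⊕ Unit) → Fin T.n
  | q, Sum.inl p => T.deltaS q (List.ofFn p)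
  | q, Sum.inr (Sum.inl a) => T.tr q a
  | q, Sum.inr (Sum.inr _) => q

def oE {A : Type} (T : FST A) (m : ℕ) (z : A) :
    Fin T.n → (Fin m → A) ⊕ (A ⊕ Unit) → List A
  | q, Sum.inl p => T.nuS q (List.ofFn p)
  | q, Sum.inr (Sum.inl a) => T.out1 q a
  | _, Sum.inr (Sum.inr _) => List.replicate (m * m) z

theorem nuS_append {A : Type} (T : FST A) (u v : List A) : ∀ q,
    T.nuS q (u ++ v) = T.nuS q u ++ T.nuS (T.deltaS q u) v := by
  induction u with
  | nil => intro q; rfl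
  | cons a u ih => intro q; simp [FST.nuS, FST.deltaS, ih]

theorem zerosE {A : Type} (T : FST A) (m : ℕ) (z : A) (r : ℕ) (q : Fin T.n) :
    runO (stE T m) (oE T m z) q (List.replicate r (Sum.inr (Sum.inr ()))) =
      List.replicate (r * (m * m)) z := by
  induction r with
  | zero => simp [runO]
  | succ r ih =>
    rw [List.replicate_succ, runO, stE, ih, oE, ← List.replicate_add]
    congr 1; ring

theorem smallE {A : Type} (T : FST A) (m : ℕ) (z : A) (es0 : List ((Fin m → A) ⊕ (A ⊕ Unit)))
    (zz : List A) (h0 : ∀ q, runO (stE T m) (oE T m z) q es0 = zz) (π : List A) :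
    ∀ q, runO (stE T m) (oE T m z) q (π.map (fun a => Sum.inr (Sum.inl a)) ++ es0) =
      T.nuS q π ++ zz := by
  induction π with
  | nil => intro q; simpa [FST.nuS] using h0 q
  | cons a π ih => intro q; simp [runO, stE, oE, FST.nuS, ih]

theorem simE {A : Type} (T : FST A) (m : ℕ) (hm : 1 ≤ m) (z : A)
    (es0 : List ((Fin m → A) ⊕ (A ⊕ Unit)))
    (zz : List A) (h0 : ∀ q, runO (stE T m) (oE T m z) q es0 = zz) (N : ℕ) :
    ∀ (π : List A), π.length ≤ N → ∀ q, ∃ es, runO (stE T m) (oE T m z) q es = T.nuS q π ++ zz ∧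
      es.length ≤ π.length / m + m + es0.length := by
  induction N with
  | zero =>
    intro π hπ q
    have : π = [] := List.eq_nil_of_length_eq_zero (by omega)
    subst this
    exact ⟨es0, by simpa [FST.nuS] using h0 q, by simp⟩
  | succ N ih =>
    intro π hπ q
    by_cases hlt : π.length < m
    · exact ⟨_, smallE T m z es0 zz h0 π q, by
        rw [List.length_append, List.length_map]
        have := Nat.zero_le (π.length / m)
        linarith⟩
    · push Not at hlt
      obtain ⟨es, h1, h2⟩ := ih (π.drop m) (by simp; omega) (T.deltaS q (π.take m))
      have hof : List.ofFn (fun i : Fin m => π.get ⟨i.1, lt_of_lt_of_le i.2 hlt⟩) = π.take m := by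
        apply List.ext_getElem
        · simp [hlt]
        · intro i h h'; simp
      refine ⟨Sum.inl (fun i : Fin m => π.get ⟨i.1, lt_of_lt_of_le i.2 hlt⟩) :: es, ?_, ?_⟩
      · rw [runO, stE, oE, hof, h1, ← List.append_assoc, ← nuS_append, List.take_append_drop]
      · have : π.length / m = (π.length - m) / m + 1 := Nat.div_eq_sub_div (by omega) hlt
        simp at h2 ⊢; omega

theorem cardC (b m : ℕ) (hb : 2 ≤ b) (hm : 1 ≤ m) :
    Fintype.card ((Option Bool × ((Fin m → Fin b) ⊕ (Fin b ⊕ Unit))) ⊕ Fin b) ≤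
      Fintype.card (Fin b) ^ (m + 4) := by
  simp only [Fintype.card_sum, Fintype.card_prod, Fintype.card_option, Fintype.card_bool,
    Fintype.card_fun, Fintype.card_fin, Fintype.card_unit]
  have h1 : b ≤ b ^ m := Nat.le_self_pow (by omega) b
  have h2 : 2 ^ 4 ≤ b ^ 4 := Nat.pow_le_pow_left hb 4
  rw [pow_add]
  nlinarith [Nat.mul_le_mul_left (b ^ m) h2]

/-! Real number part -/

def cmp (b : ℕ) (a : Fin b) : Fin b := ⟨b - 1 - a.1, by have := a.2; omega⟩

def pint {b : ℕ} (S : ℕ → Fin b) : ℕ → ℤ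
  | 0 => 0
  | n + 1 => b * pint S n + (S n : ℕ)

theorem summ {b : ℕ} (hb : 2 ≤ b) (S : ℕ → Fin b) :
    Summable (fun i : ℕ => (S i : ℝ) / (b : ℝ) ^ (i + 1)) := by
  have hb' : (1:ℝ) < b := by exact_mod_cast hb
  have hg : Summable (fun i : ℕ => ((b:ℝ)⁻¹) ^ i) :=
    summable_geometric_of_lt_one (by positivity) (inv_lt_one_of_one_lt₀ hb')
  refine Summable.of_nonneg_of_le (fun i => by positivity) (fun i => ?_) hg
  have : ((S i : ℕ) : ℝ) ≤ b := by exact_mod_cast (S i).2.le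
  rw [div_le_iff₀ (by positivity), pow_succ, inv_pow, ← mul_assoc,
    inv_mul_cancel₀ (by positivity), one_mul]
  exact this

theorem realSeq_bounds {b : ℕ} (hb : 2 ≤ b) (S : ℕ → Fin b) :
    0 ≤ realSeq b S ∧ realSeq b S ≤ 1 := by
  have hb' : (1:ℝ) < b := by exact_mod_cast hb
  refine ⟨tsum_nonneg (fun i => by positivity), ?_⟩
  have hg : HasSum (fun i : ℕ => ((b:ℝ) - 1) * (b:ℝ)⁻¹ * ((b:ℝ)⁻¹) ^ i) 1 := by
    have := (hasSum_geometric_of_lt_one (r := (b:ℝ)⁻¹) (by positivity)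
      (inv_lt_one_of_one_lt₀ hb')).mul_left (((b:ℝ) - 1) * (b:ℝ)⁻¹)
    have h1 : (b:ℝ) - 1 ≠ 0 := by linarith
    have h2 : (b:ℝ) ≠ 0 := by linarith
    have h3 : 1 - (b:ℝ)⁻¹ = ((b:ℝ) - 1) * (b:ℝ)⁻¹ := by rw [sub_mul, mul_inv_cancel₀ h2, one_mul]
    rw [h3, mul_inv_cancel₀ (mul_ne_zero h1 (inv_ne_zero h2))] at this
    exact this
  refine (Summable.tsum_le_tsum (fun i => ?_) (summ hb S) hg.summable).trans hg.tsum_eq.le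
  have : ((S i : ℕ) : ℝ) ≤ b - 1 := by
    have := (S i).2
    have : ((S i : ℕ) : ℝ) + 1 ≤ b := by exact_mod_cast this
    linarith
  rw [mul_assoc, ← pow_succ', inv_pow, div_eq_mul_inv]
  gcongr

theorem sum_pint {b : ℕ} (hb : 2 ≤ b) (S : ℕ → Fin b) (n : ℕ) :
    ∑ i ∈ Finset.range n, (S i : ℝ) / (b : ℝ) ^ (i + 1) = (pint S n : ℝ) / (b:ℝ) ^ n := by
  have hb' : (b:ℝ) ≠ 0 := by positivity
  induction n with
  | zero => simp [pint]
  | succ n ih =>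
    rw [Finset.sum_range_succ, ih, pint]
    push_cast
    field_simp
    ring

theorem real_pint {b : ℕ} (hb : 2 ≤ b) (S : ℕ → Fin b) (n : ℕ) :
    (pint S n : ℝ) ≤ realSeq b S * (b:ℝ) ^ n ∧ realSeq b S * (b:ℝ) ^ n ≤ pint S n + 1 := by
  have hb' : (b:ℝ) ≠ 0 := by positivity
  have h := (summ hb S).sum_add_tsum_nat_add n
  have h2 : ∑' i, (S (i + n) : ℝ) / (b : ℝ) ^ (i + n + 1) =
      realSeq b (fun i => S (i + n)) / (b:ℝ) ^ n := by
    rw [realSeq, ← tsum_div_const]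
    congr 1; ext i
    rw [div_div, ← pow_add]; congr 2; ring
  have h3 : realSeq b S * (b:ℝ) ^ n = pint S n + realSeq b (fun i => S (i + n)) := by
    have : realSeq b S = _ := h.symm
    rw [this, h2, sum_pint hb]
    field_simp
  have := realSeq_bounds hb (fun i => S (i + n))
  rw [h3]
  constructor <;> linarith

theorem carry {b : ℕ} (hb : 2 ≤ b) (U V : ℕ → Fin b) (n t : ℕ) (ht : t < n)
    (heq : ∀ i < t, U i = V i) (hlt : U t < V t)
    (hd : pint V n - pint U n < 2) :
    ∀ i < n, t < i → V i = cmp b (U i) := by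
  have h0 : ∀ i ≤ t, pint U i = pint V i := by
    intro i hi
    induction i with
    | zero => rfl
    | succ i ih => rw [pint, pint, ih (by omega), heq i (by omega)]
  have hbz : (2:ℤ) ≤ b := by exact_mod_cast hb
  have h1 : ∀ k, 1 ≤ pint V (t + 1 + k) - pint U (t + 1 + k) := by
    intro k
    induction k with
    | zero =>
      simp only [add_zero, pint]
      rw [h0 t le_rfl]
      have : (U t : ℕ) < (V t : ℕ) := hlt
      omega
    | succ k ih =>
      rw [← add_assoc, pint, pint]
      have := (U (t + 1 + k)).2
      nlinarith
  have h2 : ∀ j, 2 ≤ pint V j - pint U j → ∀ k, 2 ≤ pint V (j + k) - pint U (j + k) := by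
    intro j hj k
    induction k with
    | zero => simpa using hj
    | succ k ih =>
      rw [← add_assoc, pint, pint]
      have := (U (j + k)).2
      nlinarith
  have h3 : ∀ j, t < j → j ≤ n → pint V j - pint U j = 1 := by
    intro j hj hjn
    have a := h1 (j - (t + 1))
    rw [show t + 1 + (j - (t + 1)) = j by omega] at a
    by_contra hne
    have c := h2 j (by omega) (n - j)
    rw [show j + (n - j) = n by omega] at c
    omega
  intro i hi hti
  have a := h3 i hti hi.le
  have c := h3 (i + 1) (by omega) hi
  rw [pint, pint] at c
  have hU := (U i).2
  have hV := (V i).2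
  have e : (b:ℤ) * pint V i = b * pint U i + b := by
    rw [show pint V i = pint U i + 1 by omega]; ring
  apply Fin.ext
  simp only [cmp]
  omega

theorem relST {b : ℕ} (hb : 2 ≤ b) (S W : ℕ → Fin b) (n : ℕ)
    (hd : |realSeq b W - realSeq b S| < ((b:ℝ) ^ n)⁻¹) :
    ∃ t, (∀ i < n, i < t → S i = W i) ∧ (∀ i < n, t < i → S i = cmp b (W i)) := by
  by_cases hall : ∀ i < n, S i = W i
  · exact ⟨n, fun i hi _ => hall i hi, fun i hi h => by omega⟩
  push Not at hall
  classical
  have hP : 0 < (b:ℝ) ^ n := by positivity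
  have hd' : |realSeq b W * (b:ℝ) ^ n - realSeq b S * (b:ℝ) ^ n| < 1 := by
    rw [← sub_mul, abs_mul, abs_of_pos hP]
    calc _ < ((b:ℝ) ^ n)⁻¹ * (b:ℝ) ^ n := by gcongr
      _ = 1 := inv_mul_cancel₀ hP.ne'
  rw [abs_lt] at hd'
  have hW := real_pint hb W n
  have hSS := real_pint hb S n
  have d1 : pint W n - pint S n < 2 := by
    have : ((pint W n - pint S n : ℤ) : ℝ) < 2 := by push_cast; linarith
    exact_mod_cast this
  have d2 : pint S n - pint W n < 2 := by
    have : ((pint S n - pint W n : ℤ) : ℝ) < 2 := by push_cast; linarith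
    exact_mod_cast this
  let t := Nat.find hall
  obtain ⟨htn, htne⟩ : t < n ∧ S t ≠ W t := Nat.find_spec hall
  have hmin : ∀ i < t, S i = W i := by
    intro i hi
    have := Nat.find_min hall hi
    push Not at this
    exact this (by omega)
  refine ⟨t, fun i _ hi => hmin i hi, ?_⟩
  rcases lt_or_gt_of_ne htne with h | h
  · intro i hi hti
    have := carry hb S W n t htn hmin h d1 i hi hti
    rw [this]
    have := (S i).2
    apply Fin.ext; simp [cmp]; omega
  · exact carry hb W S n t htn (fun i hi => (hmin i hi).symm) h d2

theorem realSeq_pad {b : ℕ} (z : Fin b) (hz : (z : ℕ) = 0) (w : List (Fin b)) :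
    realSeq b (fun i => w.getD i z) = realb b w := by
  rw [realSeq, tsum_eq_sum (s := Finset.range w.length), realb, Finset.sum_range]
  · apply Finset.sum_congr rfl
    intro i _
    simp
  · intro i hi
    simp at hi
    rw [List.getD_eq_default _ _ hi, hz]; simp

/-! Key lemma -/

theorem key (b : ℕ) (hb : 2 ≤ b) (S : ℕ → Fin b) (T : FST (Fin b)) (m : ℕ) (hm : 1 ≤ m) :
    ∃ (T' : FST (Fin b)) (C : ℕ), ∀ (n : ℕ) (π : List (Fin b)),
      |realb b (T.out π) - realSeq b S| < ((b:ℝ) ^ n)⁻¹ →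
      Kfst T' (pre S n) ≤ (((m + 4) * (π.length / m + n / (m * m) + C) : ℕ) : ℕ∞) := by
  let z : Fin b := ⟨0, by omega⟩
  obtain ⟨L, hL⟩ : ∃ L, ∀ q e, (oE T m z q e).length ≤ L := by
    obtain ⟨L, hL⟩ := (Set.finite_range (fun p : Fin T.n × ((Fin m → Fin b) ⊕ (Fin b ⊕ Unit)) =>
      (oE T m z p.1 p.2).length)).bddAbove
    exact ⟨L, fun q e => hL ⟨(q, e), rfl⟩⟩
  haveI : Nonempty ((Option Bool × ((Fin m → Fin b) ⊕ (Fin b ⊕ Unit))) ⊕ Fin b) := ⟨Sum.inr z⟩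
  obtain ⟨T', hT'⟩ := lemBlock (m + 4) (by omega) (cardC b m hb hm) (stC (stE T m))
    (oC (oE T m z) (cmp b)) T.q0
  refine ⟨T', m + 1 + L + (L + 1), fun n π hπ => ?_⟩
  set r := n / (m * m) + 1 with hr
  have hrn : n ≤ r * (m * m) := by
    have := Nat.lt_div_mul_add (a := n) (b := m * m) (by positivity)
    rw [hr]; nlinarith
  obtain ⟨es, h1, h2⟩ := simE T m hm z _ _ (zerosE T m z r) π.length π le_rfl T.q0
  let W : ℕ → Fin b := fun i => (T.out π).getD i z
  obtain ⟨t, ht1, ht2⟩ := relST hb S W n (by rw [realSeq_pad z rfl]; exact hπ)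
  have hlen : n ≤ (runO (stE T m) (oE T m z) T.q0 es).length := by
    rw [h1]; simp; omega
  obtain ⟨cs, hcs, hcl⟩ := lemG (stE T m) (oE T m z) (cmp b) L hL S W n t ht1 ht2 es T.q0 0
    (Nat.zero_le _) (by omega) (by
      rw [h1]
      apply List.ext_getElem
      · simp
      · intro i hi hi'
        simp only [List.getElem_map, List.getElem_range', W, FST.out]
        by_cases hlt : i < (T.nuS T.q0 π).length
        · simp [List.getElem_append, hlt]
        · push Not at hlt
          simp [List.getElem_append, hlt])
  obtain ⟨ρ, hρ1, hρ2⟩ := hT' cs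
  have hpre : pre S n = (List.range' 0 (n - 0)).map S := by
    apply List.ext_getElem <;> simp [pre]
  refine (sInf_le ⟨ρ, ?_, rfl⟩ : Kfst T' (pre S n) ≤ _).trans ?_
  · rw [hρ2, hcs, hpre]
  · rw [hρ1]
    norm_cast
    apply Nat.mul_le_mul_left
    simp at h2 hcl
    omega

theorem sInf_mem' (s : Set ℕ∞) (h : sInf s ≠ ⊤) : sInf s ∈ s := by
  apply csInf_mem
  by_contra hne
  rw [Set.not_nonempty_iff_eq_empty] at hne
  exact h (by simp [hne])

theorem exists_prog (b : ℕ) (T : FST (Fin b)) (δ x : ℝ) (h : Kprec b T δ x ≠ ⊤) :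
    ∃ π : List (Fin b), |realb b (T.out π) - x| < δ ∧ (π.length : ℕ∞) = Kprec b T δ x := by
  obtain ⟨w, h1, h2⟩ := sInf_mem' _ h
  have h3 : Kfst T w ≠ ⊤ := by rw [h2]; exact h
  obtain ⟨π, h4, h5⟩ := sInf_mem' _ h3
  refine ⟨π, by rw [h4]; exact h1, ?_⟩
  exact h5.trans h2

theorem exists_m (c c' : ℝ) (h : c < c') :
    ∃ m : ℕ, 1 ≤ m ∧ (1 + 4 / (m:ℝ)) * c + (1 + 4 / (m:ℝ)) * (1 / (m:ℝ)) < c' := by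
  have h4 : Tendsto (fun m : ℕ => 4 / (m:ℝ)) atTop (nhds 0) := tendsto_const_div_atTop_nhds_zero_nat 4
  have h1 : Tendsto (fun m : ℕ => 1 / (m:ℝ)) atTop (nhds 0) := tendsto_const_div_atTop_nhds_zero_nat 1
  have := ((h4.const_add 1).mul_const c).add ((h4.const_add 1).mul h1)
  have h2 := this.eventually (gt_mem_nhds (show (1 + 0) * c + (1 + 0) * 0 < c' by linarith))
  obtain ⟨m, hm1, hm2⟩ := ((eventually_ge_atTop 1).and h2).exists
  exact ⟨m, hm1, hm2⟩

theorem step (b : ℕ) (hb : 2 ≤ b) (S : ℕ → Fin b) (T : FST (Fin b)) (c c' : NNReal) (hc : c < c')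
    (hf : ∃ᶠ δ : ℝ in nhdsWithin 0 (Set.Ioi 0),
      (Kprec b T δ (realSeq b S) : ℝ≥0∞) / ENNReal.ofReal (Real.logb b (1/δ)) < c) :
    dimFSseq S ≤ c' := by
  have hb' : (1:ℝ) < b := by exact_mod_cast hb
  obtain ⟨m, hm, hmc⟩ := exists_m c c' (by exact_mod_cast hc)
  have hm0 : (0:ℝ) < m := by exact_mod_cast hm
  obtain ⟨T', C, hT'⟩ := key b hb S T m hm
  refine (iInf_le _ T').trans ?_
  apply Filter.liminf_le_of_frequently_le'
  rw [Filter.frequently_atTop]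
  intro N
  set d : ℝ := c' - ((1 + 4 / (m:ℝ)) * c + (1 + 4 / (m:ℝ)) * (1 / (m:ℝ))) with hd
  have hdpos : 0 < d := by linarith
  obtain ⟨M, hM⟩ := exists_nat_ge (((m:ℝ) + 4) * (c / m + C) / d)
  let N1 := max (max N M) 1
  have hδe : ∀ᶠ δ : ℝ in nhdsWithin 0 (Set.Ioi 0), δ ∈ Set.Ioo (0:ℝ) (((b:ℝ) ^ N1)⁻¹) :=
    Ioo_mem_nhdsGT (by positivity)
  obtain ⟨δ, hK, hδ0, hδ1⟩ := (hf.and_eventually hδe).exists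
  set l := Real.logb b (1/δ) with hl
  have hδinv : (0:ℝ) < 1 / δ := by positivity
  have hlN : (N1:ℝ) ≤ l := by
    rw [hl, Real.le_logb_iff_rpow_le hb' hδinv, Real.rpow_natCast, le_div_iff₀ hδ0]
    have := (mul_lt_mul_of_pos_left hδ1 (show (0:ℝ) < (b:ℝ) ^ N1 by positivity)).le
    rwa [mul_inv_cancel₀ (by positivity)] at this
  have hl1 : (1:ℝ) ≤ l := le_trans (by exact_mod_cast le_max_right _ _) hlN
  have hl0 : 0 ≤ l := by linarith
  set n := ⌊l⌋₊ with hn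
  have hnl : (n:ℝ) ≤ l := Nat.floor_le hl0
  have hln : l < n + 1 := Nat.lt_floor_add_one l
  have hN1n : N1 ≤ n := Nat.le_floor hlN
  refine ⟨n, le_trans (le_trans (le_max_left _ _) (le_max_left _ _)) hN1n, ?_⟩
  have hMn : (M:ℝ) ≤ n := by
    exact_mod_cast le_trans (le_trans (le_max_right _ _) (le_max_left _ _)) hN1n
  have hn1 : 1 ≤ n := le_trans (le_max_right _ _) hN1n
  have hδn : δ ≤ ((b:ℝ) ^ n)⁻¹ := by
    have h := hnl
    rw [hl, Real.le_logb_iff_rpow_le hb' hδinv, Real.rpow_natCast, one_div] at h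
    exact (le_inv_comm₀ (by positivity) hδ0).mp h
  have hK2 : (Kprec b T δ (realSeq b S) : ℝ≥0∞) < c * ENNReal.ofReal l :=
    (ENNReal.div_lt_iff (Or.inl (by simpa using by linarith)) (Or.inl ENNReal.ofReal_ne_top)).mp hK
  have hKtop : Kprec b T δ (realSeq b S) ≠ ⊤ := by
    intro h
    rw [h] at hK2
    simp at hK2
  obtain ⟨π, hπ1, hπ2⟩ := exists_prog b T δ _ hKtop
  rw [← hπ2] at hK2
  have hlen : (π.length : ℝ) ≤ c * l := by
    have h1 : ENNReal.ofReal (π.length : ℝ) ≤ ENNReal.ofReal (c * l) := by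
      rw [ENNReal.ofReal_mul (NNReal.coe_nonneg c), ENNReal.ofReal_coe_nnreal, ENNReal.ofReal_natCast]
      simpa using hK2.le
    exact (ENNReal.ofReal_le_ofReal_iff (by positivity)).mp h1
  have hfin := hT' n π (lt_of_lt_of_le hπ1 hδn)
  set X : ℕ := (m + 4) * (π.length / m + n / (m * m) + C) with hX
  have hXr : (X:ℝ) ≤ c' * n := by
    have e1 : ((π.length / m : ℕ) : ℝ) ≤ c * (n + 1) / m := by
      refine Nat.cast_div_le.trans ?_
      gcongr
      exact hlen.trans (by gcongr)
    have e2 : ((n / (m * m) : ℕ) : ℝ) ≤ n / (m * m) := by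
      refine Nat.cast_div_le.trans ?_
      push_cast; exact le_rfl
    have e3 : ((m:ℝ) + 4) * (c / m + C) ≤ d * n := by
      rw [div_le_iff₀ hdpos] at hM
      nlinarith
    calc (X:ℝ) = ((m:ℝ) + 4) * (((π.length / m : ℕ) : ℝ) + ((n / (m * m) : ℕ) : ℝ) + C) := by
          rw [hX]; push_cast; ring
      _ ≤ ((m:ℝ) + 4) * (c * (n + 1) / m + n / (m * m) + C) := by gcongr
      _ = ((1 + 4 / (m:ℝ)) * c + (1 + 4 / (m:ℝ)) * (1 / (m:ℝ))) * n
            + ((m:ℝ) + 4) * (c / m + C) := by field_simp; ring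
      _ ≤ ((1 + 4 / (m:ℝ)) * c + (1 + 4 / (m:ℝ)) * (1 / (m:ℝ))) * n + d * n := by linarith
      _ = c' * n := by rw [hd]; ring
  apply ENNReal.div_le_of_le_mul
  have h1 : (Kfst T' (pre S n) : ℝ≥0∞) ≤ (X : ℝ≥0∞) := by
    have := ENat.toENNReal_le.mpr hfin
    simpa using this
  refine h1.trans ?_
  have : X ≤ c' * (n : NNReal) := by exact_mod_cast hXr
  exact_mod_cast this

end DimAux

/-- dim_FS(seq_b(x)) ≤ dim_FS^b(x). -/
theorem dimFSseq_le_dimFSb (b : ℕ) (hb : 2 ≤ b) (x : ℝ) (hx : x ∈ Set.Ico (0:ℝ) 1)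
    (S : ℕ → Fin b) (hS : realSeq b S = x) (hS' : ¬ endsBm1 b S) :
    dimFSseq S ≤ dimFSb b x := by
  subst hS
  refine le_iInf fun T => ?_
  by_contra hlt
  push Not at hlt
  obtain ⟨c, h1, h2⟩ := ENNReal.lt_iff_exists_nnreal_btwn.mp hlt
  obtain ⟨c', h3, h4⟩ := ENNReal.lt_iff_exists_nnreal_btwn.mp h2
  have hf := Filter.frequently_lt_of_liminf_lt (by isBoundedDefault) h1
  exact absurd (DimAux.step b hb S T c c' (by exact_mod_cast h3) hf) (not_le.mpr h4)
end

section
/- For every base b ≥ 2, x ∈ [0,1), and A ⊆ [0,1): dim_FS^b(x) = dim_FS(seq_b(x)) and dim_FS^b(A) = dim_FS(seq_b(A)), where seq_b(A) = {seq_b(α) : α ∈ A} and dim_FS of a set of sequences is inf_T sup_{S} liminf_n K^T(S↾n)/n. -/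
open Filter Set
open scoped ENNReal

section machine

def nuG {A σ : Type} (tr : σ → A → σ) (out : σ → A → List A) : σ → List A → List A
  | _, [] => []
  | q, a :: w => out q a ++ nuG tr out (tr q a) w

theorem exists_fst {A σ : Type} [Fintype σ] (tr : σ → A → σ) (out : σ → A → List A) (s0 : σ) :
    ∃ T : FST A, ∀ π, T.out π = nuG tr out s0 π := by
  classical
  let e := Fintype.equivFin σ
  let T : FST A := ⟨Fintype.card σ, fun q a => e (tr (e.symm q) a), fun q a => out (e.symm q) a, e s0⟩
  refine ⟨T, ?_⟩
  have h : ∀ π s, T.nuS (e s) π = nuG tr out s π := by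
    intro π
    induction π with
    | nil => intro s; rfl
    | cons a w ih =>
      intro s
      have h1 : T.nuS (e s) (a :: w) = out (e.symm (e s)) a ++ T.nuS (e (tr (e.symm (e s)) a)) w := rfl
      rw [h1, ih, e.symm_apply_apply]; rfl
  intro π
  exact h π s0

theorem nuS_append {A : Type} (T : FST A) (x y : List A) (q : Fin T.n) :
    T.nuS q (x ++ y) = T.nuS q x ++ T.nuS (T.deltaS q x) y := by
  induction x generalizing q with
  | nil => rfl
  | cons a w ih => simp [FST.nuS, FST.deltaS, ih]

theorem nuS_bound {A : Type} [Fintype A] (T : FST A) :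
    ∃ C : ℕ, ∀ π q, (T.nuS q π).length ≤ C * π.length := by
  refine ⟨∑ p : Fin T.n × A, (T.out1 p.1 p.2).length, ?_⟩
  intro π
  induction π with
  | nil => intro q; simp [FST.nuS]
  | cons a w ih =>
    intro q
    have h1 := ih (T.tr q a)
    have h2 : (T.out1 q a).length ≤ ∑ p : Fin T.n × A, (T.out1 p.1 p.2).length :=
      Finset.single_le_sum (f := fun p : Fin T.n × A => (T.out1 p.1 p.2).length)
        (fun _ _ => Nat.zero_le _) (Finset.mem_univ (q, a))
    simp only [FST.nuS, List.length_append, List.length_cons, Nat.mul_add, Nat.mul_one]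
    omega

variable {A : Type} [DecidableEq A] (T : FST A) (m : ℕ) (z : A)

def mtr : (Fin T.n × Fin (m+1)) ⊕ Option A → A → (Fin T.n × Fin (m+1)) ⊕ Option A
  | .inl (q, i), a => if i.1 = 0 then (if a = z then .inl (q, Fin.last m) else .inr none)
      else .inl (T.tr q a, ⟨i.1 - 1, by omega⟩)
  | .inr none, a => .inr (some a)
  | .inr (some _), _ => .inr none

def mout : (Fin T.n × Fin (m+1)) ⊕ Option A → A → List A
  | .inl (q, i), a => if i.1 = 0 then [] else T.out1 q a
  | .inr none, _ => []
  | .inr (some f), a => if f = z then [a] else List.replicate m a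

local notation "nn" => nuG (mtr T m z) (mout T m z)

theorem tail_lit (v : List A) : ∃ π : List A, π.length = 2 * v.length ∧
    ∀ ρ, nn (.inr none) (π ++ ρ) = v ++ nn (.inr none) ρ := by
  induction v with
  | nil => exact ⟨[], by simp⟩
  | cons a v ih =>
    obtain ⟨π, h1, h2⟩ := ih
    refine ⟨z :: a :: π, by simp [h1]; ring, fun ρ => ?_⟩
    simp [nuG, mtr, mout, h2]

theorem tail_run0 {o : A} (ho : o ≠ z) (c : A) (j : ℕ) : ∃ π : List A, π.length = 2 * j ∧
    ∀ ρ, nn (.inr none) (π ++ ρ) = List.replicate (m * j) c ++ nn (.inr none) ρ := by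
  induction j with
  | zero => exact ⟨[], by simp⟩
  | succ j ih =>
    obtain ⟨π, h1, h2⟩ := ih
    refine ⟨o :: c :: π, by simp [h1]; ring, fun ρ => ?_⟩
    simp [nuG, mtr, mout, h2, ho]
    rw [← List.append_assoc, List.replicate_append_replicate]; congr 2; ring

theorem tail_run (hm : 0 < m) {o : A} (ho : o ≠ z) (c : A) (k : ℕ) :
    ∃ π : List A, m * π.length ≤ 2 * k + 2 * m * m ∧
    ∀ ρ, nn (.inr none) (π ++ ρ) = List.replicate k c ++ nn (.inr none) ρ := by
  obtain ⟨π, h1, h2⟩ := tail_run0 T m z ho c (k / m)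
  obtain ⟨π', h1', h2'⟩ := tail_lit T m z (List.replicate (k % m) c)
  have e := Nat.div_add_mod k m
  have l := Nat.mod_lt k hm
  refine ⟨π ++ π', ?_, fun ρ => ?_⟩
  · simp [h1, h1']
    nlinarith
  · rw [List.append_assoc, h2, h2', ← List.append_assoc, List.replicate_append_replicate, e]

theorem block0 (β ρ : List A) (q : Fin T.n) (i : ℕ) (hi : i < m + 1) (h : β.length = i) :
    nn (.inl (q, ⟨i, hi⟩)) (β ++ ρ) = T.nuS q β ++ nn (.inl (T.deltaS q β, 0)) ρ := by
  induction β generalizing q i with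
  | nil => simp at h; subst h; rfl
  | cons a w ih =>
    obtain rfl : i = w.length + 1 := by simpa using h.symm
    have := ih (T.tr q a) w.length (by omega) rfl
    simp [nuG, mtr, mout, FST.nuS, FST.deltaS]
    exact this

theorem block1 (β ρ : List A) (q : Fin T.n) (h : β.length = m) :
    nn (.inl (q, 0)) (z :: (β ++ ρ)) = T.nuS q β ++ nn (.inl (T.deltaS q β, 0)) ρ := by
  rw [← block0 T m z β ρ q m (by omega) h]
  simp [nuG, mtr, mout]; rfl

theorem simul (hm : 0 < m) {o : A} (ho : o ≠ z) (C : ℕ)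
    (hC : ∀ π q, (T.nuS q π).length ≤ C * π.length) :
    ∀ (l : ℕ) (π : List A) (q : Fin T.n) (u : List A), π.length ≤ l → u <+: T.nuS q π →
    ∃ π' : List A, m * π'.length ≤ (m + 1) * π.length + m * (1 + 2 * (m * C)) ∧
    ∀ ρ, nn (.inl (q, 0)) (π' ++ ρ) = u ++ nn (.inr none) ρ := by
  intro l
  induction l using Nat.strong_induction_on with
  | _ l ih =>
  intro π q u hl hu
  by_cases hs : u.length ≤ m * C
  · obtain ⟨π', h1, h2⟩ := tail_lit T m z u
    refine ⟨o :: π', ?_, fun ρ => ?_⟩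
    · simp only [List.length_cons, h1]
      have : m * (2 * u.length + 1) ≤ m * (1 + 2 * (m * C)) := Nat.mul_le_mul_left _ (by omega)
      nlinarith
    · simp [nuG, mtr, mout, ho, h2]
  · push Not at hs
    have h1 : u.length ≤ C * π.length := hu.length_le.trans (hC π q)
    have h2 : m < π.length := by
      by_contra hh
      push Not at hh
      have : C * π.length ≤ C * m := Nat.mul_le_mul_left _ hh
      rw [mul_comm C m] at this; omega
    obtain ⟨β, π₂, rfl, hβ⟩ : ∃ β π₂ : List A, π = β ++ π₂ ∧ β.length = m :=
      ⟨π.take m, π.drop m, (List.take_append_drop _ _).symm, by simp; omega⟩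
    have hβC := hC β q
    rw [hβ, mul_comm] at hβC
    rw [nuS_append] at hu
    obtain ⟨u₂, rfl⟩ : T.nuS q β <+: u :=
      List.prefix_of_prefix_length_le (List.prefix_append _ _) hu (by omega)
    have hu2 := (List.prefix_append_right_inj _).1 hu
    simp only [List.length_append] at hl
    obtain ⟨π', g1, g2⟩ := ih (l - m) (by omega) π₂ (T.deltaS q β) u₂ (by omega) hu2
    refine ⟨z :: (β ++ π'), ?_, fun ρ => ?_⟩
    · simp only [List.length_cons, List.length_append, hβ]
      nlinarith
    · rw [List.cons_append, List.append_assoc, block1 T m z _ _ _ hβ, g2, List.append_assoc]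

end machine

theorem mach {A : Type} [Fintype A] (z o : A) (ho : o ≠ z) (T : FST A) (m : ℕ) (hm : 0 < m) :
    ∃ (T' : FST A) (D : ℕ), ∀ (π u : List A) (k1 k2 k3 : ℕ) (c1 c2 c3 : A), u <+: T.out π →
      ∃ π' : List A, T'.out π' =
        u ++ (List.replicate k1 c1 ++ (List.replicate k2 c2 ++ List.replicate k3 c3)) ∧
        m * π'.length ≤ (m + 1) * π.length + 2 * (k1 + k2 + k3) + D := by
  classical
  obtain ⟨C, hC⟩ := nuS_bound T
  obtain ⟨T', hT'⟩ := exists_fst (mtr T m z) (mout T m z) (.inl (T.q0, 0))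
  refine ⟨T', m * (1 + 2 * (m * C)) + 6 * m * m, ?_⟩
  intro π u k1 k2 k3 c1 c2 c3 hu
  obtain ⟨p0, a0, e0⟩ := simul T m z hm ho C hC _ π T.q0 u le_rfl hu
  obtain ⟨p1, a1, e1⟩ := tail_run T m z hm ho c1 k1
  obtain ⟨p2, a2, e2⟩ := tail_run T m z hm ho c2 k2
  obtain ⟨p3, a3, e3⟩ := tail_run T m z hm ho c3 k3
  refine ⟨p0 ++ (p1 ++ (p2 ++ (p3 ++ []))), ?_, ?_⟩
  · rw [hT', e0, e1, e2, e3]; simp [nuG]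
  · simp only [List.length_append, List.length_nil]
    nlinarith

theorem realSeq_eq (b : ℕ) (S : ℕ → Fin b) : realSeq b S = Real.ofDigits S := by
  simp [realSeq, Real.ofDigits, Real.ofDigitsTerm, div_eq_mul_inv]

theorem ofDigits_step {b : ℕ} (a : ℕ → Fin b) :
    Real.ofDigits a = ((a 0 : ℝ) + Real.ofDigits (fun i => a (i + 1))) / b := by
  rw [Real.ofDigits_eq_sum_add_ofDigits a 1]
  simp [Real.ofDigitsTerm]; ring

theorem ofDigits_upper {b : ℕ} (hb : 2 ≤ b) (t : ℕ) : ∀ a : ℕ → Fin b, (a t : ℕ) ≠ b - 1 →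
    Real.ofDigits a ≤ 1 - ((b : ℝ) ^ (t + 1))⁻¹ := by
  have hb' : (2:ℝ) ≤ b := by exact_mod_cast hb
  have hb0 : (0:ℝ) < b := by linarith
  induction t with
  | zero =>
    intro a h
    have h1 := (a 0).isLt
    have h2 : ((a 0 : ℕ) : ℝ) + 2 ≤ b := by
      have : (a 0 : ℕ) + 2 ≤ b := by omega
      exact_mod_cast this
    rw [ofDigits_step, div_le_iff₀ hb0]
    have h3 := Real.ofDigits_le_one (fun i => a (i + 1))
    have : (1 - ((b:ℝ) ^ (0+1))⁻¹) * b = b - 1 := by field_simp; ring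
    rw [this]; linarith
  | succ t ih =>
    intro a h
    have h1 := (a 0).isLt
    have h2 : ((a 0 : ℕ) : ℝ) + 1 ≤ b := by exact_mod_cast h1
    rw [ofDigits_step, div_le_iff₀ hb0]
    have h3 := ih (fun i => a (i + 1)) h
    have : (1 - ((b:ℝ) ^ (t+1+1))⁻¹) * b = b - ((b:ℝ) ^ (t+1))⁻¹ := by field_simp; ring
    rw [this]; linarith

theorem ofDigits_lower {b : ℕ} (t : ℕ) (a : ℕ → Fin b) (h : (a t : ℕ) ≠ 0) :
    ((b : ℝ) ^ (t + 1))⁻¹ ≤ Real.ofDigits a := by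
  have h1 : Real.ofDigitsTerm a t ≤ Real.ofDigits a :=
    Real.summable_ofDigitsTerm.le_tsum t (fun _ _ => Real.ofDigitsTerm_nonneg)
  refine le_trans ?_ h1
  unfold Real.ofDigitsTerm
  have : (1:ℝ) ≤ (a t : ℕ) := by exact_mod_cast Nat.one_le_iff_ne_zero.2 h
  exact le_mul_of_one_le_left (by positivity) this

def padz {A : Type} (z : A) (w : List A) (i : ℕ) : A := if h : i < w.length then w[i] else z

theorem realb_eq_sum (b : ℕ) (z : Fin b) (w : List (Fin b)) :
    realb b w = ∑ i ∈ Finset.range w.length, Real.ofDigitsTerm (padz z w) i := by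
  rw [Finset.sum_range, realb]
  refine Finset.sum_congr rfl fun i _ => ?_
  simp [Real.ofDigitsTerm, padz, div_eq_mul_inv]

theorem realb_eq_ofDigits (b : ℕ) (z : Fin b) (hz : (z : ℕ) = 0) (w : List (Fin b)) :
    realb b w = Real.ofDigits (padz z w) := by
  rw [Real.ofDigits_eq_sum_add_ofDigits _ w.length, ← realb_eq_sum]
  simp [Real.ofDigits, Real.ofDigitsTerm, padz, hz]

theorem realb_pre (b : ℕ) (S : ℕ → Fin b) (n : ℕ) :
    realb b (pre S n) = ∑ i ∈ Finset.range n, Real.ofDigitsTerm S i := by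
  rw [realb_eq_sum b (S 0)]
  have : (pre S n).length = n := by simp [pre]
  rw [this]
  refine Finset.sum_congr rfl fun i hi => ?_
  simp at hi
  simp [Real.ofDigitsTerm, padz, pre, hi]

theorem pre_close (b : ℕ) (hb : 2 ≤ b) (S : ℕ → Fin b) (hS : ¬ endsBm1 b S) (n : ℕ) :
    |realb b (pre S n) - realSeq b S| < ((b : ℝ) ^ n)⁻¹ := by
  have hb0 : (0:ℝ) < b := by exact_mod_cast (by omega : 0 < b)
  rw [realSeq_eq, Real.ofDigits_eq_sum_add_ofDigits S n, realb_pre]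
  have h0 := Real.ofDigits_nonneg (fun i => S (i + n))
  have h1 : Real.ofDigits (fun i => S (i + n)) < 1 := by
    unfold endsBm1 at hS
    push Not at hS
    obtain ⟨i, hi, h⟩ := hS n
    have := ofDigits_upper hb (i - n) (fun i => S (i + n)) (by simpa [Nat.sub_add_cancel hi] using h)
    have : 0 < ((b : ℝ) ^ (i - n + 1))⁻¹ := by positivity
    linarith
  rw [sub_add_cancel_left, abs_neg, abs_of_nonneg (by positivity)]
  exact mul_lt_of_lt_one_right (by positivity) h1

theorem pre_add {A : Type} (S : ℕ → A) (j k : ℕ) :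
    pre S (j + k) = pre S j ++ pre (fun i => S (j + i)) k := by
  simp [pre, List.ofFn_add]

theorem pre_const {A : Type} (S : ℕ → A) (k : ℕ) (c : A) (h : ∀ i < k, S i = c) :
    pre S k = List.replicate k c := by
  apply List.ext_getElem
  · simp [pre]
  · intro i h1 h2
    simp [pre] at h1 ⊢
    exact h i h1

theorem pre_padz {A : Type} (z : A) (w : List A) (n : ℕ) :
    pre (padz z w) n = w.take n ++ List.replicate (n - w.length) z := by
  apply List.ext_getElem
  · simp [pre]; omega
  · intro i h1 h2
    simp [pre, padz, List.getElem_append] at h1 ⊢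
    grind

theorem digits_rest {b : ℕ} (hb : 2 ≤ b) (z : Fin b) (hz : (z : ℕ) = 0) (S W : ℕ → Fin b) (n j : ℕ)
    (hj : j < n) (heq : ∀ i < j, S i = W i) (hne : S j ≠ W j)
    (h : |Real.ofDigits W - Real.ofDigits S| < ((b : ℝ) ^ n)⁻¹) :
    ∃ c, ∀ i, j < i → i < n → S i = c := by
  have hb' : (2:ℝ) ≤ b := by exact_mod_cast hb
  have hb0 : (0:ℝ) < b := by linarith
  have hs : ∑ i ∈ Finset.range j, Real.ofDigitsTerm S i = ∑ i ∈ Finset.range j, Real.ofDigitsTerm W i :=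
    Finset.sum_congr rfl fun i hi => by simp [Real.ofDigitsTerm, heq i (Finset.mem_range.mp hi)]
  rw [Real.ofDigits_eq_sum_add_ofDigits S (j+1), Real.ofDigits_eq_sum_add_ofDigits W (j+1),
    Finset.sum_range_succ, Finset.sum_range_succ, hs] at h
  have hp : 0 < ((b:ℝ) ^ (j+1))⁻¹ := by positivity
  have key : ∀ i, j < i → i < n →
      ((b:ℝ)^n)⁻¹ ≤ ((b:ℝ) ^ (j+1))⁻¹ * ((b:ℝ) ^ (i - (j+1) + 1))⁻¹ := by
    intro i h1 h2
    rw [← mul_inv, ← pow_add]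
    apply inv_anti₀ (by positivity)
    exact pow_le_pow_right₀ (by linarith) (by omega)
  simp only [Real.ofDigitsTerm] at h
  set p := ((b:ℝ) ^ (j+1))⁻¹
  have a1 := Real.ofDigits_le_one (fun i => S (i + (j+1)))
  have a2 := Real.ofDigits_le_one (fun i => W (i + (j+1)))
  have a3 := Real.ofDigits_nonneg (fun i => S (i + (j+1)))
  have a4 := Real.ofDigits_nonneg (fun i => W (i + (j+1)))
  rw [abs_lt] at h
  rcases lt_or_gt_of_ne hne with hlt | hgt
  · refine ⟨⟨b - 1, by omega⟩, fun i h1 h2 => ?_⟩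
    by_contra hc
    have hc' : (S i : ℕ) ≠ b - 1 := fun h => hc (Fin.ext h)
    have u := ofDigits_upper hb (i - (j+1)) (fun i => S (i + (j+1)))
      (by simpa [Nat.sub_add_cancel h1] using hc')
    have d : ((S j : ℕ) : ℝ) + 1 ≤ (W j : ℕ) := by exact_mod_cast hlt
    have k := key i h1 h2
    nlinarith [h.1, h.2]
  · refine ⟨z, fun i h1 h2 => ?_⟩
    by_contra hc
    have hc' : (S i : ℕ) ≠ 0 := fun h => hc (Fin.ext (h.trans hz.symm))
    have u := ofDigits_lower (i - (j+1)) (fun i => S (i + (j+1)))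
      (by simpa [Nat.sub_add_cancel h1] using hc')
    have d : ((W j : ℕ) : ℝ) + 1 ≤ (S j : ℕ) := by exact_mod_cast hgt
    have k := key i h1 h2
    nlinarith [h.1, h.2]

theorem decomp {b : ℕ} (hb : 2 ≤ b) (S : ℕ → Fin b) (w : List (Fin b)) (n : ℕ)
    (h : |realb b w - realSeq b S| < ((b : ℝ) ^ n)⁻¹) :
    ∃ (u : List (Fin b)) (k1 k2 k3 : ℕ) (c1 c2 c3 : Fin b), u <+: w ∧ k1 + k2 + k3 ≤ n ∧
      pre S n = u ++ (List.replicate k1 c1 ++ (List.replicate k2 c2 ++ List.replicate k3 c3)) := by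
  classical
  let z : Fin b := ⟨0, by omega⟩
  rw [realb_eq_ofDigits b z rfl, realSeq_eq] at h
  by_cases hall : ∀ i < n, S i = padz z w i
  · refine ⟨w.take n, n - w.length, 0, 0, z, z, z, List.take_prefix _ _, by omega, ?_⟩
    have : pre S n = pre (padz z w) n := by
      unfold pre; congr 1; funext i; exact hall i i.2
    simp [this, pre_padz]
  · have hex : ∃ i, i < n ∧ S i ≠ padz z w i := by push Not at hall; exact hall
    obtain ⟨hj, hne⟩ := Nat.find_spec hex
    have hmin : ∀ i < Nat.find hex, S i = padz z w i := by
      intro i hi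
      have := Nat.find_min hex hi
      by_contra hc
      exact this ⟨by omega, hc⟩
    generalize Nat.find hex = j at hj hne hmin
    obtain ⟨c, hc⟩ := digits_rest hb z rfl S (padz z w) n j hj hmin hne h
    refine ⟨w.take j, j - w.length, 1, n - j - 1, z, S j, c, List.take_prefix _ _, by omega, ?_⟩
    have e : n = j + (1 + (n - j - 1)) := by omega
    have e1 : pre S j = pre (padz z w) j := by
      unfold pre; congr 1; funext i; exact hmin i i.2
    conv_lhs => rw [e]
    rw [pre_add, pre_add, e1, pre_padz, List.append_assoc,
      pre_const _ 1 (S j) (by intro i hi; congr 1; omega),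
      pre_const _ (n - j - 1) c (fun i hi => hc _ (by omega) (by omega))]

theorem exists_seq (b : ℕ) (hb : 2 ≤ b) (x : ℝ) (hx : x ∈ Set.Ico (0:ℝ) 1) :
    ∃ S : ℕ → Fin b, realSeq b S = x ∧ ¬ endsBm1 b S := by
  have : NeZero b := ⟨by omega⟩
  have hb0 : (0:ℝ) < b := by exact_mod_cast (by omega : 0 < b)
  have hd := Real.ofDigits_digits (b := b) (by omega) hx
  refine ⟨Real.digits x b, by rw [realSeq_eq, hd], ?_⟩
  rintro ⟨N, hN⟩
  have h1 := Real.ofDigits_eq_sum_add_ofDigits (Real.digits x b) N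
  have h2 : (fun i => Real.digits x b (i + N)) = fun _ => (⟨b - 1, by omega⟩ : Fin b) := by
    funext i; exact Fin.ext (hN _ (by omega))
  rw [h2, Real.ofDigits_const_last_eq_one' (by omega), hd] at h1
  have h3 := Real.ofDigits_digits_sum_eq (b := b) hx N
  have h4 : (b:ℝ)^N * x = ⌊(b:ℝ)^N * x⌋₊ + 1 := by
    rw [← h3]; conv_lhs => rw [h1]
    field_simp
  have := Nat.lt_floor_add_one ((b:ℝ)^N * x)
  linarith

theorem Kfst_le {A : Type} (T : FST A) (π w : List A) (h : T.out π = w) :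
    Kfst T w ≤ (π.length : ℕ∞) := sInf_le ⟨π, h, rfl⟩

theorem Kprec_lt {b : ℕ} {T : FST (Fin b)} {δ x : ℝ} {B : ℝ≥0∞}
    (h : (Kprec b T δ x : ℝ≥0∞) < B) :
    ∃ (w π : List (Fin b)), |realb b w - x| < δ ∧ T.out π = w ∧ ((π.length : ℕ) : ℝ≥0∞) < B := by
  have hne : Kprec b T δ x ≠ ⊤ := by
    intro h'
    rw [h'] at h
    simp at h
  have h1 : Kprec b T δ x < ⊤ := lt_top_iff_ne_top.2 hne
  have hs : {k : ℕ∞ | ∃ w : List (Fin b), |realb b w - x| < δ ∧ Kfst T w = k}.Nonempty := by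
    obtain ⟨k, hk, _⟩ := sInf_lt_iff.1 h1
    exact ⟨k, hk⟩
  obtain ⟨w, hw, hk⟩ := csInf_mem hs
  have hk' : Kfst T w = Kprec b T δ x := hk
  have h2 : Kfst T w < ⊤ := hk' ▸ h1
  have hs2 : {k : ℕ∞ | ∃ π : List (Fin b), T.out π = w ∧ (π.length : ℕ∞) = k}.Nonempty := by
    obtain ⟨k, hk, _⟩ := sInf_lt_iff.1 h2
    exact ⟨k, hk⟩
  obtain ⟨π, hπ, hl⟩ := csInf_mem hs2
  have hl' : (π.length : ℕ∞) = Kprec b T δ x := Eq.trans hl hk'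
  refine ⟨w, π, hw, hπ, ?_⟩
  rw [← hl'] at h
  simpa using h

theorem easy (b : ℕ) (hb : 2 ≤ b) (T : FST (Fin b)) (S : ℕ → Fin b) (hS : ¬ endsBm1 b S) :
    Filter.liminf (fun δ : ℝ =>
      (Kprec b T δ (realSeq b S) : ℝ≥0∞) / ENNReal.ofReal (Real.logb b (1/δ)))
      (nhdsWithin 0 (Set.Ioi 0)) ≤
    Filter.liminf (fun n : ℕ => (Kfst T (pre S n) : ℝ≥0∞) / (n : ℝ≥0∞)) Filter.atTop := by
  have hb' : (2:ℝ) ≤ b := by exact_mod_cast hb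
  have hb0 : (0:ℝ) < b := by linarith
  have ht : Tendsto (fun n : ℕ => ((b:ℝ)^n)⁻¹) atTop (nhdsWithin 0 (Set.Ioi 0)) := by
    rw [tendsto_nhdsWithin_iff]
    refine ⟨?_, Eventually.of_forall fun n => ?_⟩
    · exact (tendsto_pow_atTop_atTop_of_one_lt (by linarith)).inv_tendsto_atTop
    · rw [Set.mem_Ioi]
      positivity
  have h1 := liminf_le_liminf_of_le (u := fun δ : ℝ =>
      (Kprec b T δ (realSeq b S) : ℝ≥0∞) / ENNReal.ofReal (Real.logb b (1/δ))) ht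
  refine h1.trans ?_
  rw [← Filter.liminf_comp]
  refine liminf_le_liminf (Eventually.of_forall fun n => ?_)
  have h2 : Real.logb b (1 / ((b:ℝ)^n)⁻¹) = n := by
    rw [one_div, inv_inv, Real.logb_pow, Real.logb_self_eq_one (by linarith), mul_one]
  simp only [Function.comp, h2, ENNReal.ofReal_natCast]
  apply ENNReal.div_le_div_right
  rw [ENat.toENNReal_le]
  exact sInf_le ⟨pre S n, pre_close b hb S hS n, rfl⟩

theorem core (b : ℕ) (hb : 2 ≤ b) (T : FST (Fin b)) (r : ℝ) (hr : 0 ≤ r) (m : ℕ) (hm : 0 < m) :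
    ∃ T' : FST (Fin b), ∀ S : ℕ → Fin b,
      Filter.liminf (fun δ : ℝ =>
        (Kprec b T δ (realSeq b S) : ℝ≥0∞) / ENNReal.ofReal (Real.logb b (1/δ)))
        (nhdsWithin 0 (Set.Ioi 0)) < ENNReal.ofReal r →
      Filter.liminf (fun n : ℕ => (Kfst T' (pre S n) : ℝ≥0∞) / (n : ℝ≥0∞)) Filter.atTop
        ≤ ENNReal.ofReal (r + (r + 3) / m) := by
  have hb' : (2:ℝ) ≤ b := by exact_mod_cast hb
  have hb0 : (0:ℝ) < b := by linarith
  have hm0 : (0:ℝ) < m := by exact_mod_cast hm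
  obtain ⟨T', D, hT'⟩ := mach (⟨0, by omega⟩ : Fin b) ⟨1, by omega⟩ (by simp) T m hm
  refine ⟨T', fun S hlt => ?_⟩
  have hf := frequently_lt_of_liminf_lt (by isBoundedDefault) hlt
  have hlog : Tendsto (fun δ : ℝ => Real.logb b (1/δ)) (nhdsWithin 0 (Set.Ioi 0)) atTop := by
    have : Tendsto (fun δ : ℝ => 1/δ) (nhdsWithin 0 (Set.Ioi 0)) atTop := by
      simpa using tendsto_inv_nhdsGT_zero (𝕜 := ℝ)
    exact (Real.tendsto_logb_atTop (by linarith)).comp this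
  have hfl : Tendsto (fun δ : ℝ => ⌊Real.logb b (1/δ)⌋₊) (nhdsWithin 0 (Set.Ioi 0)) atTop :=
    tendsto_nat_floor_atTop.comp hlog
  refine liminf_le_of_frequently_le' (hfl.frequently
    (p := fun n : ℕ => (Kfst T' (pre S n) : ℝ≥0∞) / (n : ℝ≥0∞) ≤ ENNReal.ofReal (r + (r + 3) / m)) ?_)
  have hev : ∀ᶠ δ : ℝ in nhdsWithin 0 (Set.Ioi 0),
      0 < δ ∧ max 1 ((m + 1) * r + D) ≤ (⌊Real.logb b (1/δ)⌋₊ : ℝ) :=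
    (eventually_mem_nhdsWithin.mono fun δ h => h).and
      ((tendsto_natCast_atTop_atTop.comp hfl).eventually_ge_atTop _)
  refine (hf.and_eventually hev).mono ?_
  rintro δ ⟨hK, hδ, hn⟩
  set L := Real.logb b (1/δ) with hL
  set n := ⌊L⌋₊ with hnn
  have hn1 : (1:ℝ) ≤ n := (le_max_left _ _).trans hn
  have hn2 : (m + 1) * r + D ≤ (n:ℝ) := (le_max_right _ _).trans hn
  have hL0 : 0 < L := by
    by_contra hc
    have : n = 0 := Nat.floor_of_nonpos (by linarith)
    rw [this] at hn1; norm_num at hn1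
  have hnL : (n:ℝ) ≤ L := Nat.floor_le hL0.le
  have hLn : L < n + 1 := Nat.lt_floor_add_one L
  rw [ENNReal.div_lt_iff (Or.inl (by simpa using hL0)) (Or.inl ENNReal.ofReal_ne_top),
    ← ENNReal.ofReal_mul hr] at hK
  obtain ⟨w, π, hw, hπ, hlen⟩ := Kprec_lt hK
  have hlen' : (π.length : ℝ) < r * L := by
    rw [← ENNReal.ofReal_natCast] at hlen
    exact (ENNReal.ofReal_lt_ofReal_iff_of_nonneg (by positivity)).1 hlen
  have hδn : δ ≤ ((b:ℝ)^n)⁻¹ := by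
    rw [← one_div, le_div_comm₀ hδ (by positivity)]
    have : (b:ℝ)^(n:ℝ) ≤ 1/δ := by
      rw [← Real.le_logb_iff_rpow_le (by linarith) (by positivity)]
      exact hnL
    simpa using this
  obtain ⟨u, k1, k2, k3, c1, c2, c3, hu, hk, hpre⟩ := decomp hb S w n (hw.trans_le hδn)
  obtain ⟨π', ho, hl⟩ := hT' π u k1 k2 k3 c1 c2 c3 (by rw [hπ]; exact hu)
  have hKf := Kfst_le T' π' (pre S n) (by rw [ho, hpre])
  have hl' : (m:ℝ) * π'.length ≤ (m + 1) * π.length + 2 * n + D := by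
    have : m * π'.length ≤ (m + 1) * π.length + 2 * n + D := by omega
    exact_mod_cast this
  have hfin : (π'.length : ℝ) ≤ (r + (r + 3) / m) * n := by
    rw [← mul_le_mul_iff_right₀ hm0]
    have e : (m:ℝ) * ((r + (r + 3) / m) * n) = ((m + 1) * r + 3) * n := by field_simp; ring
    rw [e]
    have : (m + 1 : ℝ) * π.length ≤ (m + 1) * (r * (n + 1)) := by
      apply mul_le_mul_of_nonneg_left _ (by positivity)
      exact hlen'.le.trans (mul_le_mul_of_nonneg_left hLn.le hr)
    nlinarith
  apply ENNReal.div_le_of_le_mul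
  rw [← ENNReal.ofReal_natCast n, ← ENNReal.ofReal_mul (by positivity)]
  calc (Kfst T' (pre S n) : ℝ≥0∞) ≤ ((π'.length : ℕ∞) : ℝ≥0∞) := ENat.toENNReal_le.2 hKf
    _ = ENNReal.ofReal (π'.length : ℝ) := by simp
    _ ≤ _ := ENNReal.ofReal_le_ofReal hfin

theorem core2 (b : ℕ) (hb : 2 ≤ b) (a c : ℝ≥0∞)
    (h : ∀ (r : ℝ) (m : ℕ), 0 ≤ r → 0 < m → c < ENNReal.ofReal r →
      a ≤ ENNReal.ofReal (r + (r + 3) / m)) : a ≤ c := by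
  refine le_of_forall_gt_imp_ge_of_dense fun R hR => ?_
  by_cases hT : R = ⊤
  · simp [hT]
  have hRr : ENNReal.ofReal R.toReal = R := ENNReal.ofReal_toReal hT
  have ht : Tendsto (fun m : ℕ => ENNReal.ofReal (R.toReal + (R.toReal + 3) / m)) atTop
      (nhds (ENNReal.ofReal (R.toReal + 0))) :=
    ENNReal.tendsto_ofReal (tendsto_const_nhds.add (tendsto_const_div_atTop_nhds_zero_nat _))
  rw [add_zero, hRr] at ht
  refine ge_of_tendsto ht ?_
  filter_upwards [eventually_gt_atTop 0] with m hm
  exact h R.toReal m ENNReal.toReal_nonneg hm (by rw [hRr]; exact hR)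

/-- dim_FS^b(x) = dim_FS(seq_b(x)) and dim_FS^b(A) = dim_FS(seq_b(A)). -/
theorem dimFSb_eq_dimFSseq (b : ℕ) (hb : 2 ≤ b) :
    (∀ x ∈ Set.Ico (0:ℝ) 1, ∀ S : ℕ → Fin b,
      realSeq b S = x → ¬ endsBm1 b S → dimFSb b x = dimFSseq S) ∧
    (∀ A : Set ℝ, A ⊆ Set.Ico (0:ℝ) 1 →
      dimFSbSet b A = dimFSseqSet {S : ℕ → Fin b | realSeq b S ∈ A ∧ ¬ endsBm1 b S}) := by
  constructor
  · rintro x - S rfl hS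
    apply le_antisymm
    · exact iInf_mono fun T => easy b hb T S hS
    · refine core2 b hb _ _ fun r m hr hm hlt => ?_
      obtain ⟨T, hT⟩ := iInf_lt_iff.1 hlt
      obtain ⟨T', hT'⟩ := core b hb T r hr m hm
      exact (iInf_le _ T').trans (hT' S hT)
  · intro A hA
    apply le_antisymm
    · refine iInf_mono fun T => iSup₂_le fun x hx => ?_
      obtain ⟨S, rfl, hS⟩ := exists_seq b hb x (hA hx)
      exact (easy b hb T S hS).trans (le_iSup₂_of_le S ⟨hx, hS⟩ le_rfl)
    · refine core2 b hb _ _ fun r m hr hm hlt => ?_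
      obtain ⟨T, hT⟩ := iInf_lt_iff.1 hlt
      obtain ⟨T', hT'⟩ := core b hb T r hr m hm
      refine (iInf_le _ T').trans (iSup₂_le fun S hS => hT' S (lt_of_le_of_lt ?_ hT))
      exact le_iSup₂_of_le (f := fun (x : ℝ) (_ : x ∈ A) => Filter.liminf (fun δ : ℝ =>
        (Kprec b T δ x : ℝ≥0∞) / ENNReal.ofReal (Real.logb b (1/δ)))
        (nhdsWithin 0 (Set.Ioi 0))) (realSeq b S) hS.1 le_rfl
end

section
/- Let b ≥ 2 and x ∈ [0,1). Then x is normal in base b if and only if dim_FS^b(x) = 1, i.e., inf_T liminf_{δ→0} K^T_δ(x)/log_b(1/δ) = 1 where the infimum is over all Σ_b-FSTs. -/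
open Filter Set
open scoped ENNReal

namespace NormalAux

lemma realb_nil (b : ℕ) : realb b [] = 0 := by simp [realb]

lemma realb_cons (b : ℕ) (hb : 2 ≤ b) (a : Fin b) (w : List (Fin b)) :
    realb b (a :: w) = ((a : ℝ) + realb b w) / b := by
  have hb0 : (b : ℝ) ≠ 0 := by positivity
  unfold realb
  simp only [List.length_cons]
  rw [Fin.sum_univ_succ, add_div, Finset.sum_div]
  congr 1
  · simp
  · apply Finset.sum_congr rfl
    intro i _
    simp [pow_succ, div_div]

lemma digit_le {b : ℕ} (_hb : 2 ≤ b) (a : Fin b) : (a : ℝ) ≤ (b : ℝ) - 1 := by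
  have := a.isLt
  have h : (a : ℕ) + 1 ≤ b := this
  have : ((a : ℕ) : ℝ) + 1 ≤ b := by exact_mod_cast h
  linarith

lemma hasSum_top (b : ℕ) (hb : 2 ≤ b) :
    HasSum (fun i : ℕ => ((b : ℝ) - 1) / (b : ℝ) ^ (i + 1)) 1 := by
  have hb2 : (2 : ℝ) ≤ b := by exact_mod_cast hb
  have h := (hasSum_geometric_of_lt_one (r := (b : ℝ)⁻¹) (by positivity)
    (by apply inv_lt_one_of_one_lt₀; linarith)).mul_left (((b : ℝ) - 1) / b)
  have e1 : (fun i : ℕ => ((b : ℝ) - 1) / (b : ℝ) ^ (i + 1)) =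
      fun i : ℕ => ((b : ℝ) - 1) / b * ((b : ℝ)⁻¹) ^ i := by
    funext i
    rw [inv_pow, pow_succ]
    field_simp
  have e2 : (1 : ℝ) = ((b : ℝ) - 1) / b * (1 - (b : ℝ)⁻¹)⁻¹ := by
    have h1 : (b : ℝ) - 1 ≠ 0 := by linarith
    have h2 : 1 - (b : ℝ)⁻¹ = ((b : ℝ) - 1) / b := by field_simp
    rw [h2]
    field_simp
  rw [e1]
  rwa [← e2] at h

lemma summ (b : ℕ) (hb : 2 ≤ b) (S : ℕ → Fin b) :
    Summable (fun i : ℕ => (S i : ℝ) / (b : ℝ) ^ (i + 1)) := by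
  refine Summable.of_nonneg_of_le (fun i => by positivity) (fun i => ?_) (hasSum_top b hb).summable
  have := digit_le hb (S i)
  gcongr

lemma realSeq_nonneg (b : ℕ) (S : ℕ → Fin b) : 0 ≤ realSeq b S :=
  tsum_nonneg fun i => by positivity

lemma realSeq_le_one (b : ℕ) (hb : 2 ≤ b) (S : ℕ → Fin b) : realSeq b S ≤ 1 := by
  rw [← (hasSum_top b hb).tsum_eq]
  refine (summ b hb S).tsum_le_tsum (fun i => ?_) (hasSum_top b hb).summable
  have := digit_le hb (S i)
  gcongr

lemma realSeq_succ (b : ℕ) (hb : 2 ≤ b) (S : ℕ → Fin b) :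
    realSeq b S = ((S 0 : ℝ) + realSeq b (fun i => S (i + 1))) / b := by
  have hb0 : (b : ℝ) ≠ 0 := by positivity
  unfold realSeq
  rw [(summ b hb S).tsum_eq_zero_add, add_div, ← tsum_div_const]
  simp [pow_succ, div_div]

lemma realb_nonneg (b : ℕ) (w : List (Fin b)) : 0 ≤ realb b w :=
  Finset.sum_nonneg fun i _ => by positivity

lemma realb_le_one (b : ℕ) (hb : 2 ≤ b) (w : List (Fin b)) : realb b w ≤ 1 := by
  have hb0 : (0 : ℝ) < b := by positivity
  induction w with
  | nil => simp [realb_nil]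
  | cons a w ih =>
    rw [realb_cons b hb, div_le_one hb0]
    have := digit_le hb a
    linarith

lemma inv_pow_le_one {b : ℕ} (hb : 2 ≤ b) (n : ℕ) : ((b : ℝ)⁻¹) ^ n ≤ 1 := by
  have hb2 : (2 : ℝ) ≤ b := by exact_mod_cast hb
  exact pow_le_one₀ (by positivity) (inv_le_one_of_one_le₀ (by linarith))

lemma zeros (b : ℕ) (hb : 2 ≤ b) (n : ℕ) : ∀ S : ℕ → Fin b, realSeq b S < ((b : ℝ)⁻¹) ^ n →
    ∀ i < n, (S i : ℕ) = 0 := by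
  have hb0 : (0 : ℝ) < b := by positivity
  induction n with
  | zero => intro S _ i hi; omega
  | succ n ih =>
    intro S h i hi
    rw [realSeq_succ b hb, div_lt_iff₀ hb0, pow_succ, mul_assoc, inv_mul_cancel₀ hb0.ne', mul_one] at h
    have h1 := inv_pow_le_one hb n
    have h2 := realSeq_nonneg b (fun i => S (i + 1))
    have h0 : ((S 0 : ℕ) : ℝ) < 1 := by linarith
    have h0' : (S 0 : ℕ) = 0 := by
      have : (S 0 : ℕ) < 1 := by exact_mod_cast h0
      omega
    cases i with
    | zero => exact h0'
    | succ i =>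
      refine ih (fun i => S (i + 1)) ?_ i (by omega)
      rw [h0'] at h
      simpa using h

lemma tops (b : ℕ) (hb : 2 ≤ b) (n : ℕ) : ∀ S : ℕ → Fin b, 1 - realSeq b S < ((b : ℝ)⁻¹) ^ n →
    ∀ i < n, (S i : ℕ) = b - 1 := by
  have hb0 : (0 : ℝ) < b := by positivity
  induction n with
  | zero => intro S _ i hi; omega
  | succ n ih =>
    intro S h i hi
    have e : 1 - realSeq b S = ((b : ℝ) - S 0 - realSeq b (fun i => S (i + 1))) / b := by
      rw [realSeq_succ b hb]; field_simp; ring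
    rw [e, div_lt_iff₀ hb0, pow_succ, mul_assoc, inv_mul_cancel₀ hb0.ne', mul_one] at h
    have h1 := inv_pow_le_one hb n
    have h2 := realSeq_le_one b hb (fun i => S (i + 1))
    have h0 : (b : ℝ) < (S 0 : ℕ) + 2 := by linarith
    have h0' : (S 0 : ℕ) + 1 = b := by
      have : b < (S 0 : ℕ) + 2 := by exact_mod_cast h0
      have := (S 0).isLt
      omega
    cases i with
    | zero => omega
    | succ i =>
      refine ih (fun i => S (i + 1)) ?_ i (by omega)
      have : ((S 0 : ℕ) : ℝ) + 1 = b := by exact_mod_cast h0'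
      linarith

lemma realSeq_lt_one (b : ℕ) (hb : 2 ≤ b) (S : ℕ → Fin b) (h : ¬ endsBm1 b S) :
    realSeq b S < 1 := by
  by_contra! h1
  apply h
  refine ⟨0, fun i _ => tops b hb (i + 1) S ?_ i (by omega)⟩
  have : (0 : ℝ) < ((b : ℝ)⁻¹) ^ (i + 1) := by positivity
  linarith

lemma pre_zero {A : Type} (S : ℕ → A) : pre S 0 = [] := by simp [pre]

lemma pre_succ {A : Type} (S : ℕ → A) (n : ℕ) :
    pre S (n + 1) = S 0 :: pre (fun i => S (i + 1)) n := by
  simp [pre, List.ofFn_succ]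

lemma pre_close (b : ℕ) (hb : 2 ≤ b) (n : ℕ) : ∀ S : ℕ → Fin b, ¬ endsBm1 b S →
    |realb b (pre S n) - realSeq b S| < ((b : ℝ)⁻¹) ^ n := by
  have hb0 : (0 : ℝ) < b := by positivity
  induction n with
  | zero =>
    intro S h
    simp only [pre_zero, realb_nil, zero_sub, abs_neg, pow_zero]
    rw [abs_of_nonneg (realSeq_nonneg b S)]
    exact realSeq_lt_one b hb S h
  | succ n ih =>
    intro S h
    have := ih (fun i => S (i + 1)) (by
      rintro ⟨N, hN⟩
      refine h ⟨N + 1, fun i hi => ?_⟩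
      obtain ⟨j, rfl⟩ : ∃ j, i = j + 1 := ⟨i - 1, by omega⟩
      exact hN j (by omega))
    rw [pre_succ, realb_cons b hb, realSeq_succ b hb, ← sub_div, add_sub_add_left_eq_sub, abs_div,
      abs_of_pos hb0, pow_succ, ← div_eq_mul_inv]
    gcongr

lemma agree (b : ℕ) (hb : 2 ≤ b) (w : List (Fin b)) : ∀ (S : ℕ → Fin b) (n : ℕ),
    |realb b w - realSeq b S| < ((b : ℝ)⁻¹) ^ n →
    ∃ L, pre S L <+: w ∧ ∃ d : Fin b, ∀ i, L < i → i < n → S i = d := by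
  have hb0 : (0 : ℝ) < b := by positivity
  induction w with
  | nil =>
    intro S n h
    refine ⟨0, by simp [pre_zero], ⟨0, by omega⟩, fun i _ hi => ?_⟩
    rw [realb_nil, zero_sub, abs_neg, abs_of_nonneg (realSeq_nonneg b S)] at h
    exact Fin.ext (zeros b hb n S h i hi)
  | cons a w ih =>
    intro S n h
    cases n with
    | zero => exact ⟨0, by simp [pre_zero], ⟨0, by omega⟩, fun i _ hi => by omega⟩
    | succ n =>
      rw [realb_cons b hb, realSeq_succ b hb, ← sub_div, abs_div,
        abs_of_pos hb0, pow_succ, ← div_eq_mul_inv, div_lt_div_iff_of_pos_right hb0] at h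
      rcases lt_trichotomy (a : ℕ) (S 0 : ℕ) with h1 | h1 | h1
      · refine ⟨0, by simp [pre_zero], ⟨0, by omega⟩, fun i hi0 hi => ?_⟩
        obtain ⟨j, rfl⟩ : ∃ j, i = j + 1 := ⟨i - 1, by omega⟩
        refine Fin.ext (zeros b hb n (fun i => S (i + 1)) ?_ j (by omega))
        have h2 : ((a : ℕ) : ℝ) + 1 ≤ (S 0 : ℕ) := by exact_mod_cast h1
        have h3 := realb_le_one b hb w
        rw [abs_lt] at h
        linarith [h.1]
      · have h1 : a = S 0 := Fin.ext h1
        subst h1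
        rw [add_sub_add_left_eq_sub] at h
        obtain ⟨L, hL, d, hd⟩ := ih _ _ h
        refine ⟨L + 1, ?_, d, fun i hi0 hi => ?_⟩
        · rw [pre_succ]; simpa using hL
        · obtain ⟨j, rfl⟩ : ∃ j, i = j + 1 := ⟨i - 1, by omega⟩
          exact hd j (by omega) (by omega)
      · refine ⟨0, by simp [pre_zero], ⟨b - 1, by omega⟩, fun i hi0 hi => ?_⟩
        obtain ⟨j, rfl⟩ : ∃ j, i = j + 1 := ⟨i - 1, by omega⟩
        refine Fin.ext (tops b hb n (fun i => S (i + 1)) ?_ j (by omega))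
        have h2 : ((S 0 : ℕ) : ℝ) + 1 ≤ (a : ℕ) := by exact_mod_cast h1
        have h3 := realb_nonneg b w
        rw [abs_lt] at h
        linarith [h.2]

def Nrm {b : ℕ} (S : ℕ → Fin b) : Prop := ∀ w : List (Fin b), w ≠ [] →
      Filter.Tendsto (fun N : ℕ => (occCount S w N : ℝ) / (N : ℝ)) Filter.atTop
        (nhds (1 / (b:ℝ) ^ w.length))

lemma affine_bound (f : ℕ → ℝ) (c : ℝ)
    (h : Tendsto (fun N : ℕ => f N / (N : ℝ)) atTop (nhds c)) (κ : ℝ) (hκ : 0 < κ) :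
    ∃ C : ℝ, 0 ≤ C ∧ ∀ N : ℕ, |f N - c * N| ≤ κ * N + C := by
  obtain ⟨N0, hN0⟩ := (Metric.tendsto_atTop.1 h) κ hκ
  refine ⟨∑ i ∈ Finset.range (N0 + 1), |f i - c * i|,
    Finset.sum_nonneg fun _ _ => abs_nonneg _, fun N => ?_⟩
  by_cases hN : N < N0 + 1
  · have := Finset.single_le_sum (f := fun i : ℕ => |f i - c * i|) (fun i _ => abs_nonneg _)
      (Finset.mem_range.2 hN)
    have h2 : 0 ≤ κ * N := by positivity
    linarith
  · have h1 := hN0 N (by omega)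
    have hpos : (0 : ℝ) < N := by
      have : 0 < N := by omega
      exact_mod_cast this
    rw [Real.dist_eq] at h1
    have h3 : f N - c * N = (f N / N - c) * N := by field_simp
    rw [h3, abs_mul, abs_of_pos hpos]
    have : 0 ≤ ∑ i ∈ Finset.range (N0 + 1), |f i - c * i| :=
      Finset.sum_nonneg fun _ _ => abs_nonneg _
    nlinarith

lemma occ_nrm {b : ℕ} {S : ℕ → Fin b} (h : Nrm S) (w : List (Fin b)) (hw : w ≠ []) (κ : ℝ)
    (hκ : 0 < κ) : ∃ C : ℝ, 0 ≤ C ∧ ∀ N : ℕ,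
      |(occCount S w N : ℝ) - 1 / (b:ℝ) ^ w.length * N| ≤ κ * N + C :=
  affine_bound _ _ (h w hw) κ hκ

lemma occ_run {b : ℕ} (S : ℕ → Fin b) (d : Fin b) (M k : ℕ)
    (h : ∀ i, M ≤ i → i < M + k → S i = d) : occCount S [d] (M + k) = occCount S [d] M + k := by
  induction k with
  | zero => simp
  | succ k ih =>
    have := ih (fun i h1 h2 => h i h1 (by omega))
    rw [← add_assoc, ← add_assoc, ← this]
    unfold occCount
    rw [Finset.range_add_one, Finset.filter_insert, if_pos, Finset.card_insert_of_notMem]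
    · simp
    · intro j
      have := h (M + k) (by omega) (by omega)
      have hj : j.1 = 0 := by have h3 : j.1 < 1 := j.isLt; omega
      simpa [hj] using this

lemma run_bound {b : ℕ} (hb : 2 ≤ b) {S : ℕ → Fin b} (h : Nrm S) (κ : ℝ) (hκ : 0 < κ) :
    ∃ C : ℝ, 0 ≤ C ∧ ∀ (n L : ℕ) (d : Fin b), (∀ i, L < i → i < n → S i = d) →
      (n : ℝ) ≤ L + κ * n + C := by
  have hb2 : (2 : ℝ) ≤ b := by exact_mod_cast hb
  choose C hC0 hC using fun d : Fin b => occ_nrm h [d] (by simp) (κ / 4) (by positivity)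
  refine ⟨1 + 4 * ∑ d, C d, by have := Finset.sum_nonneg (fun d (_ : d ∈ Finset.univ) => hC0 d); linarith, ?_⟩
  intro n L d hd
  have hCd : C d ≤ ∑ d, C d := Finset.single_le_sum (fun d _ => hC0 d) (Finset.mem_univ d)
  have hCn := hC0 d
  rcases le_or_gt n (L + 1) with hn | hn
  · have : (n : ℝ) ≤ L + 1 := by exact_mod_cast hn
    have : 0 ≤ κ * n := by positivity
    linarith
  · obtain ⟨k, rfl⟩ : ∃ k, n = L + 1 + k := ⟨n - (L + 1), by omega⟩
    have e := occ_run S d (L + 1) k (fun i h1 h2 => hd i (by omega) h2)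
    have h1 := hC d (L + 1 + k)
    have h2 := hC d (L + 1)
    rw [e] at h1
    simp only [List.length_singleton, pow_one] at h1 h2
    push_cast at h1 h2 ⊢
    rw [abs_le] at h1 h2
    have hk : (0 : ℝ) ≤ k := by positivity
    have hL : (0 : ℝ) ≤ L := by positivity
    have hb3 : 1 / (b : ℝ) ≤ 1 / 2 := by gcongr
    have hb4 : 1 / (b : ℝ) * k ≤ 1 / 2 * k := by gcongr
    have hk2 : 0 ≤ κ * k := by positivity
    have hL2 : 0 ≤ κ * L := by positivity
    nlinarith [h1.1, h1.2, h2.1, h2.2]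

lemma nuS_append {A : Type} (T : FST A) (u v : List A) : ∀ q,
    T.nuS q (u ++ v) = T.nuS q u ++ T.nuS (T.deltaS q u) v := by
  induction u with
  | nil => intro q; simp [FST.nuS, FST.deltaS]
  | cons a u ih => intro q; simp [FST.nuS, FST.deltaS, ih]

lemma core {A : Type} (T : FST A) (C : ℕ) (hC : ∀ q a, (T.out1 q a).length ≤ C) (π : List A) :
    ∃ σ : ℕ → ℕ, (∀ i, σ i ≤ π.length) ∧ ∀ i l, i + l ≤ (T.out π).length →
      ∃ (c : List A) (q : Fin T.n) (s : List A), c.length ≤ C ∧ s.length + σ i = σ (i + l) ∧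
        ((T.out π).drop i).take l = (c ++ T.nuS q s).take l := by
  let P : ℕ → ℕ := fun t => (T.out (π.take t)).length
  let σ : ℕ → ℕ := fun i => sInf {t | i ≤ P t}
  have hne : ∀ i ≤ (T.out π).length, π.length ∈ {t | i ≤ P t} := by
    intro i hi
    simpa [P] using hi
  have hmem : ∀ i ≤ (T.out π).length, i ≤ P (σ i) := fun i hi => Nat.sInf_mem ⟨_, hne i hi⟩
  have hle : ∀ i, σ i ≤ π.length := by
    intro i
    by_cases hi : i ≤ (T.out π).length
    · exact Nat.sInf_le (hne i hi)
    · have : {t | i ≤ P t} = ∅ := by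
        ext t
        simp only [Set.mem_ofPred_eq, Set.mem_empty_iff_false, iff_false, not_le]
        have : (T.out π) = T.out (π.take t) ++ T.nuS (T.deltaS T.q0 (π.take t)) (π.drop t) := by
          unfold FST.out
          rw [← nuS_append, List.take_append_drop]
        have := congrArg List.length this
        rw [List.length_append] at this
        simp only [P]
        omega
      simp [σ, this]
  refine ⟨σ, hle, ?_⟩
  intro i l hil
  have h1 := hmem i (by omega)
  have h2 := hmem (i + l) hil
  have hmono : σ i ≤ σ (i + l) := Nat.sInf_le (by simp only [Set.mem_ofPred_eq]; omega)
  have hP : P (σ i) ≤ i + C := by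
    rcases Nat.eq_zero_or_pos (σ i) with h0 | h0
    · rw [h0]; simp [P, FST.out, FST.nuS]
    · obtain ⟨t, ht⟩ : ∃ t, σ i = t + 1 := ⟨σ i - 1, by omega⟩
      have hlt : P t < i := by
        by_contra! h
        have : σ i ≤ t := Nat.sInf_le h
        omega
      have htl : t < π.length := by have := hle i; omega
      have : P (t + 1) ≤ P t + C := by
        simp only [P, FST.out]
        rw [List.take_add_one, nuS_append, List.length_append, List.getElem?_eq_getElem htl]
        simp only [Option.toList_some, FST.nuS, List.append_nil]
        have := hC (T.deltaS T.q0 (List.take t π)) π[t]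
        omega
      rw [ht]; omega
  set t := σ i
  set t' := σ (i + l)
  refine ⟨(T.out (π.take t)).drop i, T.deltaS T.q0 (π.take t), (π.take t').drop t, ?_, ?_, ?_⟩
  · rw [List.length_drop]; simp only [P] at hP; omega
  · have := hle (i + l)
    rw [List.length_drop, List.length_take]
    omega
  · have e1 : T.out (π.take t') = T.out (π.take t) ++
        T.nuS (T.deltaS T.q0 (π.take t)) ((π.take t').drop t) := by
      unfold FST.out
      rw [← nuS_append]
      congr 1
      conv_lhs => rw [← List.take_append_drop t (π.take t'), List.take_take, min_eq_left hmono]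
    have e2 : T.out π = T.out (π.take t') ++ T.nuS (T.deltaS T.q0 (π.take t')) (π.drop t') := by
      unfold FST.out
      rw [← nuS_append, List.take_append_drop]
    rw [← List.drop_append_of_le_length (by simpa [P] using h1), ← e1, e2,
      List.drop_append_of_le_length (by simp only [P] at h2; omega), List.take_append_of_le_length]
    rw [List.length_drop]; simp only [P] at h2; omega

noncomputable def LL (b r : ℕ) : Finset (List (Fin b)) :=
  (Finset.range (r + 1)).biUnion fun i => Finset.univ.image (fun f : Fin i → Fin b => List.ofFn f)

lemma mem_LL {b r : ℕ} (l : List (Fin b)) (h : l.length ≤ r) : l ∈ LL b r := by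
  simp only [LL, Finset.mem_biUnion, Finset.mem_range, Finset.mem_image, Finset.mem_univ, true_and]
  exact ⟨l.length, by omega, l.get, List.ofFn_get l⟩

lemma card_LL {b : ℕ} (hb : 2 ≤ b) (r : ℕ) : (LL b r).card ≤ b ^ (r + 1) := by
  have h : (LL b r).card ≤ ∑ i ∈ Finset.range (r + 1), b ^ i := by
    refine Finset.card_biUnion_le.trans (Finset.sum_le_sum fun i _ => ?_)
    refine Finset.card_image_le.trans ?_
    simp
  exact h.trans (Nat.geomSum_lt hb (fun k hk => Finset.mem_range.1 hk)).le

noncomputable def Bad {b : ℕ} (T : FST (Fin b)) (C r l : ℕ) : Finset (List (Fin b)) :=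
  ((LL b C ×ˢ (Finset.univ : Finset (Fin T.n)) ×ˢ LL b r).image
    (fun p => (p.1 ++ T.nuS p.2.1 p.2.2).take l)).filter (fun u => u.length = l)

lemma card_Bad {b : ℕ} (hb : 2 ≤ b) (T : FST (Fin b)) (C r l : ℕ) :
    (Bad T C r l).card ≤ b ^ (C + 1) * (T.n * b ^ (r + 1)) := by
  refine (Finset.card_filter_le _ _).trans (Finset.card_image_le.trans ?_)
  rw [Finset.card_product, Finset.card_product, Finset.card_univ, Fintype.card_fin]
  gcongr
  · exact card_LL hb C
  · exact card_LL hb r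

def win {A : Type} (S : ℕ → A) (i l : ℕ) : List A := List.ofFn (fun j : Fin l => S (i + j))

lemma win_iff {b : ℕ} (S : ℕ → Fin b) (w : List (Fin b)) (i : ℕ) :
    (∀ j : Fin w.length, S (i + j.1) = w.get j) ↔ win S i w.length = w := by
  constructor
  · intro h
    unfold win
    conv_rhs => rw [← List.ofFn_get w]
    congr 1
    funext j
    exact h j
  · intro h j
    have : (win S i w.length)[j.1]'(by simp [win]) = w[j.1] := by simp [h]
    simpa [win] using this

lemma telescope (σ : ℕ → ℕ) (k M l : ℕ) (h : ∀ i, σ i ≤ k) :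
    ∑ i ∈ Finset.range M, σ (i + l) ≤ ∑ i ∈ Finset.range M, σ i + l * k := by
  have h1 := Finset.sum_range_add σ M l
  have h2 := Finset.sum_range_add σ l M
  rw [add_comm l M] at h2
  have h3 : ∑ x ∈ Finset.range l, σ (M + x) ≤ l * k := by
    have := Finset.sum_le_card_nsmul (Finset.range l) (fun x => σ (M + x)) k (fun x _ => h _)
    simpa using this
  have h4 : ∑ i ∈ Finset.range M, σ (i + l) = ∑ i ∈ Finset.range M, σ (l + i) :=
    Finset.sum_congr rfl fun i _ => by rw [add_comm]
  omega

lemma core2 {b : ℕ} (T : FST (Fin b)) (C : ℕ) (hC : ∀ q a, (T.out1 q a).length ≤ C)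
    (S : ℕ → Fin b) (L M l r : ℕ) (hM : M + l ≤ L) (π : List (Fin b)) (hπ : pre S L <+: T.out π) :
    r * M ≤ l * π.length + r * ∑ u ∈ Bad T C r l, occCount S u M := by
  classical
  obtain ⟨σ, hσ, h⟩ := core T C hC π
  obtain ⟨O', hO⟩ := hπ
  have hlen : (pre S L).length = L := by simp [pre]
  have hLO : L ≤ (T.out π).length := by
    rw [← hO, List.length_append]; omega
  have hwin : ∀ i < M, ((T.out π).drop i).take l = win S i l := by
    intro i hi
    rw [← hO, List.drop_append_of_le_length (by omega),
      List.take_append_of_le_length (by rw [List.length_drop]; omega)]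
    apply List.ext_getElem
    · simp [win, pre]; omega
    · intro n h1 h2
      simp [win, pre]
  have key : ∀ i ∈ Finset.range M, r + σ i ≤ σ (i + l) +
      r * (if win S i l ∈ Bad T C r l then 1 else 0) := by
    intro i hi
    rw [Finset.mem_range] at hi
    obtain ⟨c, q, s, hc, hs, hw⟩ := h i l (by omega)
    split_ifs with hB
    · omega
    · have : r < s.length := by
        by_contra! hr
        apply hB
        rw [← hwin i hi]
        refine Finset.mem_filter.2 ⟨Finset.mem_image.2 ⟨(c, q, s), ?_, hw.symm⟩, ?_⟩
        · simp only [Finset.mem_product, Finset.mem_univ, true_and]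
          exact ⟨mem_LL c hc, mem_LL s hr⟩
        · rw [hwin i hi]; simp [win]
      omega
  have hsum := Finset.sum_le_sum key
  rw [Finset.sum_add_distrib, Finset.sum_add_distrib, ← Finset.mul_sum] at hsum
  simp only [Finset.sum_const, Finset.card_range, smul_eq_mul] at hsum
  have ht := telescope σ π.length M l hσ
  have hcount : ∑ i ∈ Finset.range M, (if win S i l ∈ Bad T C r l then 1 else 0) ≤
      ∑ u ∈ Bad T C r l, occCount S u M := by
    rw [← Finset.card_filter]
    have : (Finset.range M).filter (fun i => win S i l ∈ Bad T C r l) ⊆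
        (Bad T C r l).biUnion (fun u => (Finset.range M).filter
          (fun i => ∀ j : Fin u.length, S (i + j.1) = u.get j)) := by
      intro i hi
      rw [Finset.mem_filter] at hi
      rw [Finset.mem_biUnion]
      refine ⟨_, hi.2, Finset.mem_filter.2 ⟨hi.1, ?_⟩⟩
      rw [win_iff]
      congr 1
      simp [win]
    refine (Finset.card_le_card this).trans (Finset.card_biUnion_le.trans (le_of_eq ?_))
    refine Finset.sum_congr rfl fun u _ => ?_
    unfold occCount
    congr
  have := Nat.mul_le_mul_left r hcount
  rw [mul_comm M r] at hsum
  omega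

lemma exists_C {b : ℕ} (T : FST (Fin b)) : ∃ C, ∀ q a, (T.out1 q a).length ≤ C :=
  ⟨∑ q, ∑ a, (T.out1 q a).length, fun q a =>
    (Finset.single_le_sum (f := fun a => (T.out1 q a).length) (fun _ _ => Nat.zero_le _)
      (Finset.mem_univ a)).trans
    (Finset.single_le_sum (f := fun q => ∑ a, (T.out1 q a).length) (fun _ _ => Nat.zero_le _)
      (Finset.mem_univ q))⟩

lemma lower {b : ℕ} (hb : 2 ≤ b) {S : ℕ → Fin b} (h : Nrm S) (T : FST (Fin b)) (ε : ℝ)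
    (hε : 0 < ε) (hε1 : ε < 1) : ∃ D : ℝ, 0 ≤ D ∧ ∀ (L : ℕ) (π : List (Fin b)),
      pre S L <+: T.out π → (1 - ε) ^ 2 * L ≤ π.length + D := by
  have hb2 : (2 : ℝ) ≤ b := by exact_mod_cast hb
  have hb0 : (0 : ℝ) < b := by linarith
  obtain ⟨C, hC⟩ := exists_C T
  set A : ℝ := (b : ℝ) ^ (C + 1) * (T.n * b) with hA
  have hA0 : 0 ≤ A := by positivity
  -- choose s
  obtain ⟨s, hs⟩ : ∃ s : ℕ, 2 * A / ε < (b : ℝ) ^ s := pow_unbounded_of_one_lt _ (by linarith)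
  rw [div_lt_iff₀ hε] at hs
  -- choose l
  obtain ⟨l0, hl0⟩ := exists_nat_gt ((s : ℝ) / ε)
  set l := s + l0 + 1 with hl
  have hlpos : (0 : ℝ) < l := by positivity
  have hsl : (s : ℝ) ≤ ε * l := by
    rw [div_lt_iff₀ hε] at hl0
    rw [hl]; push_cast
    nlinarith
  set r := l0 + 1 with hr
  have hrl : (r : ℝ) = l - s := by rw [hl, hr]; push_cast; ring
  have hocc : ∀ u : List (Fin b), ∃ K : ℝ, 0 ≤ K ∧ (u.length = l → ∀ N : ℕ,
      (occCount S u N : ℝ) ≤ 2 / (b : ℝ) ^ l * N + K) := by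
    intro u
    by_cases hu : u.length = l
    · obtain ⟨K, hK0, hK⟩ := occ_nrm h u (by rintro rfl; simp at hu) (1 / (b : ℝ) ^ l) (by positivity)
      refine ⟨K, hK0, fun _ N => ?_⟩
      have := (abs_le.1 (hK N)).2
      rw [hu] at this
      have e : 2 / (b : ℝ) ^ l * N = 1 / (b : ℝ) ^ l * N + 1 / (b : ℝ) ^ l * N := by ring
      linarith
    · exact ⟨0, le_rfl, fun h => absurd h hu⟩
  choose K hK0 hK using hocc
  set D0 := ∑ u ∈ Bad T C r l, K u with hD0
  have hD0' : 0 ≤ D0 := Finset.sum_nonneg fun u _ => hK0 u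
  refine ⟨D0 + l, by positivity, fun L π hπ => ?_⟩
  have hsq : (1 - ε) ^ 2 ≤ 1 := by nlinarith
  have hsq0 : 0 ≤ (1 - ε) ^ 2 := by positivity
  rcases lt_or_ge L l with hL | hL
  · have : (L : ℝ) ≤ l := by exact_mod_cast hL.le
    have h0 : (0 : ℝ) ≤ L := by positivity
    have h1 : (0 : ℝ) ≤ π.length := by positivity
    nlinarith
  obtain ⟨M, rfl⟩ : ∃ M, L = M + l := ⟨L - l, by omega⟩
  have hc := core2 T C hC S (M + l) M l r le_rfl π hπ
  have hc' : (r : ℝ) * M ≤ l * π.length + r * ∑ u ∈ Bad T C r l, (occCount S u M : ℝ) := by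
    exact_mod_cast hc
  have hsumle : ∑ u ∈ Bad T C r l, (occCount S u M : ℝ) ≤ ε * M + D0 := by
    have h1 : ∑ u ∈ Bad T C r l, (occCount S u M : ℝ) ≤
        ∑ u ∈ Bad T C r l, (2 / (b : ℝ) ^ l * M + K u) :=
      Finset.sum_le_sum fun u hu => hK u (Finset.mem_filter.1 hu).2 M
    rw [Finset.sum_add_distrib, Finset.sum_const, nsmul_eq_mul] at h1
    have h2 : ((Bad T C r l).card : ℝ) ≤ A * (b : ℝ) ^ r := by
      have : ((Bad T C r l).card : ℝ) ≤ (b : ℝ) ^ (C + 1) * (T.n * (b : ℝ) ^ (r + 1)) := by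
        exact_mod_cast card_Bad hb T C r l
      refine this.trans (le_of_eq ?_)
      rw [hA]; ring
    have h3 : ((Bad T C r l).card : ℝ) * (2 / (b : ℝ) ^ l * M) ≤ ε * M := by
      rw [← mul_assoc]
      gcongr
      have e : (b : ℝ) ^ l = b ^ s * b ^ r := by rw [← pow_add]; congr 1
      rw [e, mul_div_assoc', div_le_iff₀ (by positivity)]
      have hbr : (0 : ℝ) < b ^ r := by positivity
      nlinarith
    linarith
  have hM0 : (0 : ℝ) ≤ M := by positivity
  have hr0 : (0 : ℝ) ≤ r := by positivity
  have h4 : (r : ℝ) * M ≤ l * π.length + r * (ε * M + D0) :=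
    hc'.trans (by gcongr)
  have h5 : (1 - ε) * l ≤ r := by rw [hrl]; linarith
  have h6 : (r : ℝ) ≤ l := by rw [hrl]; have : (0:ℝ) ≤ s := by positivity
                              linarith
  have h7 : (l : ℝ) * ((1 - ε) ^ 2 * M) ≤ l * (π.length + D0) := by
    have h8 : (1 - ε) * l * ((1 - ε) * M) ≤ r * ((1 - ε) * M) := by
      have : 0 ≤ (1 - ε) * M := mul_nonneg (by linarith) hM0
      gcongr
    have h9 : r * D0 ≤ l * D0 := by gcongr
    nlinarith
  have h10 := le_of_mul_le_mul_left h7 hlpos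
  push_cast
  nlinarith

lemma lower2 {b : ℕ} (hb : 2 ≤ b) {S : ℕ → Fin b} (h : Nrm S) (T : FST (Fin b)) (ρ : ℝ)
    (hρ0 : 0 ≤ ρ) (hρ : ρ < 1) : ∃ D : ℝ, 0 ≤ D ∧ ∀ (n : ℕ) (π : List (Fin b)),
      |realb b (T.out π) - realSeq b S| < ((b : ℝ)⁻¹) ^ n → ρ * n ≤ π.length + D := by
  set ε := (1 - ρ) / 3 with hε
  have hε0 : 0 < ε := by rw [hε]; linarith
  have hε1 : ε < 1 := by rw [hε]; linarith
  obtain ⟨D, hD0, hD⟩ := lower hb h T ε hε0 hε1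
  obtain ⟨C, hC0, hC⟩ := run_bound hb h ε hε0
  refine ⟨D + C, by positivity, fun n π hπ => ?_⟩
  obtain ⟨L, hL, d, hd⟩ := agree b hb _ S n hπ
  have h1 := hD L π hL
  have h2 := hC n L d hd
  have hsq : (1 - ε) ^ 2 ≤ 1 := by nlinarith
  have hsq0 : 0 ≤ (1 - ε) ^ 2 := by positivity
  have h3 : (1 - ε) ^ 2 * ((1 - ε) * n) ≤ (1 - ε) ^ 2 * (L + C) := by
    gcongr
    linarith
  have h4 : ρ ≤ (1 - ε) ^ 2 * (1 - ε) := by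
    have : ρ = 1 - 3 * ε := by rw [hε]; ring
    rw [this]; nlinarith [mul_nonneg hε0.le hε0.le]
  have h5 : ρ * n ≤ (1 - ε) ^ 2 * (1 - ε) * n := by gcongr
  nlinarith

lemma le_Kprec {b : ℕ} (T : FST (Fin b)) (δ x c : ℝ)
    (h : ∀ π : List (Fin b), |realb b (T.out π) - x| < δ → c ≤ π.length) :
    ENNReal.ofReal c ≤ (Kprec b T δ x : ℝ≥0∞) := by
  have h1 : ((⌈c⌉₊ : ℕ) : ℕ∞) ≤ Kprec b T δ x := by
    refine le_sInf ?_
    rintro k ⟨w, hw, rfl⟩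
    refine le_sInf ?_
    rintro k ⟨π, rfl, rfl⟩
    exact_mod_cast Nat.ceil_le.2 (h π hw)
  have h2 : ENNReal.ofReal c ≤ ((⌈c⌉₊ : ℕ) : ℝ≥0∞) := by
    rw [ENNReal.ofReal_le_iff_le_toReal (by simp)]
    simpa using Nat.le_ceil c
  refine h2.trans ?_
  have := ENat.toENNReal_le.2 h1
  simpa using this

lemma Kprec_le {b : ℕ} (T : FST (Fin b)) (δ x : ℝ) (π : List (Fin b))
    (h : |realb b (T.out π) - x| < δ) : (Kprec b T δ x : ℝ≥0∞) ≤ (π.length : ℕ) := by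
  have h1 : Kprec b T δ x ≤ (π.length : ℕ) := by
    refine (sInf_le ⟨T.out π, h, rfl⟩ : Kprec b T δ x ≤ Kfst T (T.out π)).trans ?_
    exact sInf_le ⟨π, rfl, rfl⟩
  have := ENat.toENNReal_le.2 h1
  simpa using this

lemma tendsto_log (b : ℕ) (hb : 2 ≤ b) :
    Tendsto (fun δ : ℝ => Real.logb b (1 / δ)) (nhdsWithin 0 (Set.Ioi 0)) atTop := by
  have hb2 : (1 : ℝ) < b := by exact_mod_cast hb
  have := (Real.tendsto_logb_atTop hb2).comp (tendsto_inv_nhdsGT_zero (𝕜 := ℝ))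
  simpa [Function.comp_def] using this

lemma liminf_ge {b : ℕ} (hb : 2 ≤ b) {S : ℕ → Fin b} (h : Nrm S) (T : FST (Fin b)) :
    1 ≤ Filter.liminf (fun δ : ℝ =>
      (Kprec b T δ (realSeq b S) : ℝ≥0∞) / ENNReal.ofReal (Real.logb b (1/δ)))
      (nhdsWithin 0 (Set.Ioi 0)) := by
  have hb2 : (1 : ℝ) < b := by exact_mod_cast hb
  refine le_of_forall_lt fun c hc => ?_
  obtain ⟨c', hcc', hc'⟩ := exists_between hc
  refine hcc'.trans_le ?_
  have hfin : c' ≠ ⊤ := (hc'.trans ENNReal.one_lt_top).ne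
  set ρ0 := c'.toReal with hρ0
  have e : c' = ENNReal.ofReal ρ0 := (ENNReal.ofReal_toReal hfin).symm
  have h0 : 0 ≤ ρ0 := ENNReal.toReal_nonneg
  have h1 : ρ0 < 1 := by
    rw [e] at hc'
    simpa using hc'
  set ρ := (1 + ρ0) / 2 with hρ
  obtain ⟨D, hD0, hD⟩ := lower2 hb h T ρ (by linarith) (by linarith)
  refine Filter.le_liminf_of_le (by isBoundedDefault) ?_
  filter_upwards [(tendsto_log b hb).eventually_ge_atTop (max 1 ((ρ + D) / (ρ - ρ0))),
    self_mem_nhdsWithin] with δ hδ hδ0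
  set y := Real.logb b (1 / δ) with hy
  have hδ0 : 0 < δ := hδ0
  have hy1 : 1 ≤ y := (le_max_left _ _).trans hδ
  have hy2 : ρ + D ≤ y * (ρ - ρ0) := by
    rw [← div_le_iff₀ (by rw [hρ]; linarith)]
    exact (le_max_right _ _).trans hδ
  rw [ENNReal.le_div_iff_mul_le (Or.inl (by simp; linarith)) (Or.inl (by simp)), e,
    ← ENNReal.ofReal_mul h0]
  apply le_Kprec
  intro π hπ
  have hn := Nat.floor_le (show 0 ≤ y by linarith)
  have hn2 := Nat.lt_floor_add_one y
  have hδn : δ ≤ ((b : ℝ)⁻¹) ^ ⌊y⌋₊ := by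
    have h3 : (b : ℝ) ^ y = 1 / δ := Real.rpow_logb (by linarith) (by linarith) (by positivity)
    have h4 : (b : ℝ) ^ ⌊y⌋₊ ≤ 1 / δ := by
      rw [← h3, ← Real.rpow_natCast]
      exact Real.rpow_le_rpow_of_exponent_le hb2.le hn
    rw [inv_pow, le_inv_comm₀ hδ0 (by positivity)]
    simpa using h4
  have h5 := hD ⌊y⌋₊ π (hπ.trans_le hδn)
  have h6 : ρ * (y - 1) ≤ ρ * ⌊y⌋₊ := by
    apply mul_le_mul_of_nonneg_left <;> linarith
  nlinarith

lemma liminf_le {b : ℕ} (hb : 2 ≤ b) (x : ℝ) (T : FST (Fin b)) (c : ℝ) (hc : 0 ≤ c)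
    (h : ∃ᶠ n : ℕ in atTop, ∃ π : List (Fin b), |realb b (T.out π) - x| < ((b : ℝ)⁻¹) ^ n ∧
      (π.length : ℝ) ≤ c * n) :
    Filter.liminf (fun δ : ℝ =>
      (Kprec b T δ x : ℝ≥0∞) / ENNReal.ofReal (Real.logb b (1/δ)))
      (nhdsWithin 0 (Set.Ioi 0)) ≤ ENNReal.ofReal c := by
  have hb2 : (1 : ℝ) < b := by exact_mod_cast hb
  have ht : Tendsto (fun n : ℕ => ((b : ℝ)⁻¹) ^ n) atTop (nhdsWithin 0 (Set.Ioi 0)) := by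
    rw [tendsto_nhdsWithin_iff]
    refine ⟨tendsto_pow_atTop_nhds_zero_of_lt_one (by positivity) (inv_lt_one_of_one_lt₀ hb2), ?_⟩
    exact Eventually.of_forall fun n => by simp only [Set.mem_Ioi]; positivity
  refine Filter.liminf_le_of_frequently_le ?_ (by isBoundedDefault)
  refine ht.frequently (p := fun δ => (Kprec b T δ x : ℝ≥0∞) / ENNReal.ofReal (Real.logb b (1/δ)) ≤ _) ?_
  refine (h.and_eventually (eventually_gt_atTop 0)).mono ?_
  rintro n ⟨⟨π, hπ, hlen⟩, hn⟩
  have hlog : Real.logb b (1 / ((b : ℝ)⁻¹) ^ n) = n := by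
    rw [one_div, inv_pow, inv_inv, ← Real.rpow_natCast, Real.logb_rpow (by linarith) (by linarith)]
  rw [hlog]
  refine ENNReal.div_le_of_le_mul ?_
  refine (Kprec_le T _ x π hπ).trans ?_
  rw [← ENNReal.ofReal_mul hc, ← ENNReal.ofReal_natCast]
  exact ENNReal.ofReal_le_ofReal hlen

/-- the identity transducer -/
def idFST (A : Type) : FST A where
  n := 1
  tr := fun q _ => q
  out1 := fun _ a => [a]
  q0 := 0

lemma idFST_out {A : Type} (w : List A) : (idFST A).out w = w := by
  have : ∀ q, (idFST A).nuS q w = w := by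
    induction w with
    | nil => intro q; rfl
    | cons a w ih => intro q; simp only [FST.nuS, ih]; rfl
  exact this _

lemma dim_le_one {b : ℕ} (hb : 2 ≤ b) (S : ℕ → Fin b) (hS : ¬ endsBm1 b S) :
    dimFSb b (realSeq b S) ≤ 1 := by
  refine (iInf_le _ (idFST (Fin b))).trans ?_
  rw [← ENNReal.ofReal_one]
  refine liminf_le hb _ _ 1 zero_le_one (Eventually.frequently (Eventually.of_forall fun n => ?_))
  refine ⟨pre S n, ?_, by simp [pre]⟩
  rw [idFST_out]
  exact pre_close b hb n S hS

lemma forward {b : ℕ} (hb : 2 ≤ b) (S : ℕ → Fin b) (hS : ¬ endsBm1 b S) (h : Nrm S) :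
    dimFSb b (realSeq b S) = 1 :=
  le_antisymm (dim_le_one hb S hS) (le_iInf fun T => liminf_ge hb h T)

lemma exists_decoder {A U : Type} [Finite A] (c o : U → List A) (N : ℕ)
    (hlen : ∀ u, (c u).length ≤ N) (hne : ∀ u, c u ≠ [])
    (hpf : ∀ u u', c u <+: c u' → u = u') :
    ∃ T : FST A, ∀ us : List U, T.out (us.flatMap c) = us.flatMap o := by
  classical
  let Q := {l : List A // l.length ≤ N}
  have : Finite Q := List.finite_length_le A N
  let eq := Finite.equivFin Q
  let step : Q → A → Q := fun l a =>
    if ∃ u, c u = l.1 ++ [a] then ⟨[], Nat.zero_le _⟩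
    else if h : (l.1 ++ [a]).length ≤ N then ⟨l.1 ++ [a], h⟩ else ⟨[], Nat.zero_le _⟩
  let outp : Q → A → List A := fun l a =>
    if h : ∃ u, c u = l.1 ++ [a] then o h.choose else []
  let T : FST A := ⟨Nat.card Q, fun q a => eq (step (eq.symm q) a),
    fun q a => outp (eq.symm q) a, eq ⟨[], Nat.zero_le _⟩⟩
  have claim : ∀ (r : List A) (l : Q) (u : U), c u = l.1 ++ r → r ≠ [] →
      T.nuS (eq l) r = o u ∧ T.deltaS (eq l) r = eq ⟨[], Nat.zero_le _⟩ := by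
    intro r
    induction r with
    | nil => intro l u _ h; exact absurd rfl h
    | cons a r ih =>
      intro l u hu _
      have e1 : T.out1 (eq l) a = outp l a := by simp [T]
      have e2 : T.tr (eq l) a = eq (step l a) := by simp [T]
      simp only [FST.nuS, FST.deltaS, e1, e2]
      by_cases hr : r = []
      · subst hr
        have hex : ∃ u, c u = l.1 ++ [a] := ⟨u, hu⟩
        have hch : hex.choose = u := by
          apply hpf
          rw [hex.choose_spec, hu]
        have e3 : outp l a = o u := by
          simp only [outp]
          rw [dif_pos hex, hch]
        have e4 : step l a = ⟨[], Nat.zero_le _⟩ := by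
          simp only [step]
          rw [if_pos hex]
        rw [e3, e4]
        simp [FST.nuS, FST.deltaS]
      · have hex : ¬ ∃ u, c u = l.1 ++ [a] := by
          rintro ⟨u', hu'⟩
          have h1 : c u' <+: c u := ⟨r, by rw [hu', hu]; simp⟩
          have h2 := hpf _ _ h1
          rw [h2, hu] at hu'
          have := congrArg List.length hu'
          simp at this
          exact hr this
        have hl : (l.1 ++ [a]).length ≤ N := by
          have h1 := hlen u
          rw [hu] at h1
          simp at h1 ⊢
          omega
        have e3 : outp l a = [] := by
          simp only [outp]
          rw [dif_neg hex]
        have e4 : step l a = ⟨l.1 ++ [a], hl⟩ := by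
          simp only [step]
          rw [if_neg hex, dif_pos hl]
        rw [e3, e4, List.nil_append]
        exact ih ⟨l.1 ++ [a], hl⟩ u (by simp [hu]) hr
  refine ⟨T, fun us => ?_⟩
  have : ∀ us : List U, T.nuS (eq ⟨[], Nat.zero_le _⟩) (us.flatMap c) = us.flatMap o := by
    intro us
    induction us with
    | nil => simp [FST.nuS]
    | cons u us ih =>
      have h := claim (c u) ⟨[], Nat.zero_le _⟩ u (by simp) (hne u)
      rw [List.flatMap_cons, List.flatMap_cons, nuS_append, h.1, h.2, ih]
  exact this us

lemma pre_add {A : Type} (n m : ℕ) : ∀ S : ℕ → A,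
    pre S (n + m) = pre S n ++ pre (fun i => S (n + i)) m := by
  induction n with
  | zero => intro S; simp [pre_zero]
  | succ n ih =>
    intro S
    rw [show n + 1 + m = (n + m) + 1 by ring, pre_succ, pre_succ, ih]
    simp only [List.cons_append]
    congr 3
    funext i
    congr 1
    ring

def blk {A : Type} (S : ℕ → A) (m j : ℕ) : Fin m → A := fun p => S (j * m + p)

lemma blocks {A : Type} (S : ℕ → A) (m J : ℕ) :
    ((List.range J).map (blk S m)).flatMap (fun u => List.ofFn u) = pre S (J * m) := by
  induction J with
  | zero => simp [pre_zero]
  | succ J ih =>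
    rw [List.range_succ, List.map_append, List.flatMap_append, ih, add_mul, one_mul, pre_add]
    simp [pre]
    rfl

lemma flat_len {A : Type} {U : Type} (f : ℕ → U) (c : U → List A) (J : ℕ) :
    (((List.range J).map f).flatMap c).length = ∑ j ∈ Finset.range J, (c (f j)).length := by
  induction J with
  | zero => simp
  | succ J ih =>
    rw [List.range_succ, List.map_append, List.flatMap_append, List.length_append, ih,
      Finset.sum_range_succ]
    simp

open scoped Classical in
/-- allowed letters at position `p` if `v` occurs at `i` -/
noncomputable def AL {b : ℕ} (v : List (Fin b)) (i p : ℕ) : Finset (Fin b) :=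
  Finset.univ.filter fun a => ∀ k : Fin v.length, p = i + k → a = v.get k

lemma card_AL_in {b : ℕ} (v : List (Fin b)) (i p : ℕ) (h1 : i ≤ p) (h2 : p < i + v.length) :
    (AL v i p).card = 1 := by
  rw [Finset.card_eq_one]
  refine ⟨v.get ⟨p - i, by omega⟩, ?_⟩
  ext a
  simp only [AL, Finset.mem_filter, Finset.mem_univ, true_and, Finset.mem_singleton]
  constructor
  · intro h
    exact h ⟨p - i, by omega⟩ (by simp; omega)
  · rintro rfl k hk
    congr 1
    apply Fin.ext
    simp; omega

lemma AL_out {b : ℕ} (v : List (Fin b)) (i p : ℕ) (h : ¬ (i ≤ p ∧ p < i + v.length)) :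
    AL v i p = Finset.univ := by
  ext a
  simp only [AL, Finset.mem_filter, Finset.mem_univ, true_and, iff_true]
  intro k hk
  have := k.isLt
  omega

/-- words of length m with v at i -/
noncomputable def E {b : ℕ} (v : List (Fin b)) (m i : ℕ) : Finset (Fin m → Fin b) :=
  Fintype.piFinset fun p : Fin m => AL v i p

lemma card_E {b : ℕ} (v : List (Fin b)) (m i : ℕ) (h : i + v.length ≤ m) :
    (E v m i).card * b ^ v.length = b ^ m := by
  rw [E, Fintype.card_piFinset]
  have h1 : ∏ p : Fin m, (if i ≤ p.1 ∧ p.1 < i + v.length then b else 1) = b ^ v.length := by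
    rw [Fin.prod_univ_eq_prod_range (fun p => if i ≤ p ∧ p < i + v.length then b else 1) m,
      ← Finset.prod_filter, Finset.prod_const]
    congr 1
    have : (Finset.range m).filter (fun p => i ≤ p ∧ p < i + v.length) = Finset.Ico i (i + v.length) := by
      ext p
      simp only [Finset.mem_filter, Finset.mem_range, Finset.mem_Ico]
      omega
    rw [this]; simp
  rw [← h1, ← Finset.prod_mul_distrib]
  have : ∀ p : Fin m, (AL v i p).card * (if i ≤ p.1 ∧ p.1 < i + v.length then b else 1) = b := by
    intro p
    split_ifs with hp
    · rw [card_AL_in v i p hp.1 hp.2, one_mul]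
    · rw [AL_out v i p hp]; simp
  simp [this]

lemma card_EE {b : ℕ} (v : List (Fin b)) (m i j : ℕ)
    (hij : i + v.length ≤ j ∨ j + v.length ≤ i) :
    (E v m i ∩ E v m j).card * b ^ m = (E v m i).card * (E v m j).card := by
  classical
  have e : E v m i ∩ E v m j = Fintype.piFinset fun p : Fin m => AL v i p ∩ AL v j p := by
    ext u
    simp only [E, Finset.mem_inter, Fintype.mem_piFinset]
    exact forall_and.symm
  have e2 : b ^ m = ∏ _p : Fin m, b := by simp
  rw [e, E, E, Fintype.card_piFinset, Fintype.card_piFinset, Fintype.card_piFinset, e2,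
    ← Finset.prod_mul_distrib, ← Finset.prod_mul_distrib]
  refine Finset.prod_congr rfl fun p _ => ?_
  by_cases hp : i ≤ p.1 ∧ p.1 < i + v.length
  · have : ¬ (j ≤ p.1 ∧ p.1 < j + v.length) := by omega
    rw [AL_out v j p this]; simp
  · rw [AL_out v i p hp]; simp [mul_comm]

open scoped Classical in
noncomputable def X {b : ℕ} (v : List (Fin b)) (m i : ℕ) (u : Fin m → Fin b) : ℝ :=
  (if u ∈ E v m i then 1 else 0) - 1 / (b : ℝ) ^ v.length

lemma one_div_mem {b : ℕ} (hb : 2 ≤ b) (l : ℕ) :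
    0 ≤ 1 / (b : ℝ) ^ l ∧ 1 / (b : ℝ) ^ l ≤ 1 := by
  refine ⟨by positivity, ?_⟩
  have := inv_pow_le_one hb l
  rwa [inv_pow, ← one_div] at this

lemma abs_X_le {b : ℕ} (hb : 2 ≤ b) (v : List (Fin b)) (m i : ℕ) (u : Fin m → Fin b) :
    |X v m i u| ≤ 1 := by
  have := one_div_mem hb v.length
  unfold X
  rw [abs_le]
  split_ifs <;> constructor <;> linarith

lemma sum_XX_zero {b : ℕ} (hb : 2 ≤ b) (v : List (Fin b)) (m i j : ℕ) (hi : i + v.length ≤ m)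
    (hj : j + v.length ≤ m) (hij : i + v.length ≤ j ∨ j + v.length ≤ i) :
    ∑ u, X v m i u * X v m j u = 0 := by
  classical
  have hb0 : (0 : ℝ) < b := by positivity
  set p := 1 / (b : ℝ) ^ v.length with hp
  have h1 : ((E v m i).card : ℝ) = p * b ^ m := by
    have : ((E v m i).card : ℝ) * b ^ v.length = b ^ m := by exact_mod_cast card_E v m i hi
    rw [← this, hp]; field_simp
  have h2 : ((E v m j).card : ℝ) = p * b ^ m := by
    have : ((E v m j).card : ℝ) * b ^ v.length = b ^ m := by exact_mod_cast card_E v m j hj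
    rw [← this, hp]; field_simp
  have h3 : ((E v m i ∩ E v m j).card : ℝ) = p ^ 2 * b ^ m := by
    have : ((E v m i ∩ E v m j).card : ℝ) * b ^ m = (E v m i).card * (E v m j).card := by
      exact_mod_cast card_EE v m i j hij
    rw [h1, h2] at this
    have hbm : (b : ℝ) ^ m ≠ 0 := by positivity
    apply mul_right_cancel₀ hbm
    rw [this]; ring
  have e : ∀ u, X v m i u * X v m j u = (if u ∈ E v m i ∩ E v m j then 1 else 0)
      - p * (if u ∈ E v m i then 1 else 0) - p * (if u ∈ E v m j then 1 else 0) + p ^ 2 := by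
    intro u
    unfold X
    rw [← hp]
    by_cases a1 : u ∈ E v m i <;> by_cases a2 : u ∈ E v m j <;> simp [a1, a2] <;> ring
  simp_rw [e]
  rw [Finset.sum_add_distrib, Finset.sum_sub_distrib, Finset.sum_sub_distrib, ← Finset.mul_sum,
    ← Finset.mul_sum]
  simp only [Finset.sum_ite_mem, Finset.univ_inter, Finset.sum_const, nsmul_eq_mul, mul_one]
  rw [h1, h2, h3, Finset.card_univ]
  simp
  ring

lemma second_moment {b : ℕ} (hb : 2 ≤ b) (v : List (Fin b)) (K : ℕ) :
    ∑ u : Fin (K + v.length) → Fin b, (∑ i ∈ Finset.range K, X v (K + v.length) i u) ^ 2 ≤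
      2 * v.length * K * (b : ℝ) ^ (K + v.length) := by
  set m := K + v.length with hm
  have e : ∀ u, (∑ i ∈ Finset.range K, X v m i u) ^ 2 =
      ∑ i ∈ Finset.range K, ∑ j ∈ Finset.range K, X v m i u * X v m j u := by
    intro u; rw [sq, Finset.sum_mul_sum]
  simp_rw [e]
  rw [Finset.sum_comm]
  have h1 : ∀ i ∈ Finset.range K, ∑ u, ∑ j ∈ Finset.range K, X v m i u * X v m j u ≤
      2 * v.length * (b : ℝ) ^ m := by
    intro i hi
    rw [Finset.mem_range] at hi
    rw [Finset.sum_comm]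
    have h2 : ∀ j ∈ Finset.range K, ∑ u, X v m i u * X v m j u ≤
        if j < i + v.length ∧ i < j + v.length then (b : ℝ) ^ m else 0 := by
      intro j hj
      rw [Finset.mem_range] at hj
      split_ifs with hc
      · have : ∑ u, X v m i u * X v m j u ≤ ∑ _u : Fin m → Fin b, (1 : ℝ) := by
          refine Finset.sum_le_sum fun u _ => ?_
          refine (le_abs_self _).trans ?_
          rw [abs_mul]
          exact mul_le_one₀ (abs_X_le hb v m i u) (abs_nonneg _) (abs_X_le hb v m j u)
        simpa using this
      · rw [sum_XX_zero hb v m i j (by omega) (by omega) (by omega)]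
    refine (Finset.sum_le_sum h2).trans ?_
    rw [← Finset.sum_filter, Finset.sum_const, nsmul_eq_mul]
    gcongr
    have : (Finset.range K).filter (fun j => j < i + v.length ∧ i < j + v.length) ⊆
        Finset.Ico (i - v.length) (i + v.length) := by
      intro j hj
      simp only [Finset.mem_filter, Finset.mem_range, Finset.mem_Ico] at hj ⊢
      omega
    have h3 := Finset.card_le_card this
    rw [Nat.card_Ico] at h3
    have h4 : ((Finset.range K).filter (fun j => j < i + v.length ∧ i < j + v.length)).card ≤
        2 * v.length := by omega
    exact_mod_cast h4
  refine (Finset.sum_le_sum h1).trans (le_of_eq ?_)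
  rw [Finset.sum_const, Finset.card_range, nsmul_eq_mul]
  ring

noncomputable def dev {b : ℕ} (v : List (Fin b)) (K : ℕ) (u : Fin (K + v.length) → Fin b) : ℝ :=
  ∑ i ∈ Finset.range K, X v (K + v.length) i u

open scoped Classical in
noncomputable def G {b : ℕ} (v : List (Fin b)) (K : ℕ) (t : ℝ) :
    Finset (Fin (K + v.length) → Fin b) :=
  Finset.univ.filter fun u => t ≤ |dev v K u|

lemma card_G {b : ℕ} (hb : 2 ≤ b) (v : List (Fin b)) (K : ℕ) (t : ℝ) (ht : 0 ≤ t) :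
    (G v K t).card * t ^ 2 ≤ 2 * v.length * K * (b : ℝ) ^ (K + v.length) := by
  refine le_trans ?_ (second_moment hb v K)
  rw [← nsmul_eq_mul]
  refine (Finset.card_nsmul_le_sum (G v K t) (fun u => dev v K u ^ 2) (t ^ 2) ?_).trans ?_
  · intro u hu
    have := (Finset.mem_filter.1 hu).2
    rw [← sq_abs (dev v K u)]
    gcongr
  · exact Finset.sum_le_sum_of_subset_of_nonneg (Finset.subset_univ _) fun u _ _ => sq_nonneg _

lemma block_sum (Y : ℕ → ℝ) (hY : ∀ i, |Y i| ≤ 1) (K l : ℕ) (J : ℕ) :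
    |∑ i ∈ Finset.range (J * (K + l)), Y i| ≤
      ∑ j ∈ Finset.range J, (l + |∑ i ∈ Finset.range K, Y (j * (K + l) + i)|) := by
  induction J with
  | zero => simp
  | succ J ih =>
    rw [add_mul, one_mul, Finset.sum_range_add, Finset.sum_range_succ (fun j : ℕ =>
      ((l : ℝ) + |∑ i ∈ Finset.range K, Y (j * (K + l) + i)|)), Finset.sum_range_add _ K l]
    have h1 : |∑ x ∈ Finset.range l, Y (J * (K + l) + (K + x))| ≤ l := by
      refine (Finset.abs_sum_le_sum_abs _ _).trans ?_
      have := Finset.sum_le_card_nsmul (Finset.range l) (fun x => |Y (J * (K + l) + (K + x))|) 1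
        (fun x _ => hY _)
      simpa using this
    refine (abs_add_le _ _).trans ?_
    have := abs_add_le (∑ x ∈ Finset.range K, Y (J * (K + l) + x))
      (∑ x ∈ Finset.range l, Y (J * (K + l) + (K + x)))
    linarith

lemma rem_sum (Y : ℕ → ℝ) (hY : ∀ i, |Y i| ≤ 1) (m N : ℕ) (hm : 0 < m) :
    |∑ i ∈ Finset.range N, Y i| ≤ m + |∑ i ∈ Finset.range (N / m * m), Y i| := by
  have hN : N = N / m * m + N % m := by rw [mul_comm]; exact (Nat.div_add_mod N m).symm
  conv_lhs => rw [hN]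
  rw [Finset.sum_range_add]
  have h1 : |∑ x ∈ Finset.range (N % m), Y (N / m * m + x)| ≤ (N % m : ℕ) := by
    refine (Finset.abs_sum_le_sum_abs _ _).trans ?_
    have := Finset.sum_le_card_nsmul (Finset.range (N % m)) (fun x => |Y (N / m * m + x)|) 1
      (fun x _ => hY _)
    simpa using this
  have h2 : ((N % m : ℕ) : ℝ) ≤ m := by exact_mod_cast (Nat.mod_lt N hm).le
  have := abs_add_le (∑ x ∈ Finset.range (N / m * m), Y x)
      (∑ x ∈ Finset.range (N % m), Y (N / m * m + x))
  linarith

open scoped Classical in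
noncomputable def YY {b : ℕ} (S : ℕ → Fin b) (v : List (Fin b)) (i : ℕ) : ℝ :=
  (if ∀ j : Fin v.length, S (i + j.1) = v.get j then 1 else 0) - 1 / (b : ℝ) ^ v.length

lemma abs_YY_le {b : ℕ} (hb : 2 ≤ b) (S : ℕ → Fin b) (v : List (Fin b)) (i : ℕ) :
    |YY S v i| ≤ 1 := by
  have := one_div_mem hb v.length
  unfold YY
  rw [abs_le]
  split_ifs <;> constructor <;> linarith

lemma sum_YY {b : ℕ} (S : ℕ → Fin b) (v : List (Fin b)) (N : ℕ) :
    ∑ i ∈ Finset.range N, YY S v i = occCount S v N - 1 / (b : ℝ) ^ v.length * N := by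
  unfold YY occCount
  rw [Finset.sum_sub_distrib, Finset.sum_const, Finset.card_range, nsmul_eq_mul, Finset.sum_boole]
  ring

lemma X_blk {b : ℕ} (S : ℕ → Fin b) (v : List (Fin b)) (m i j : ℕ) (h : i + v.length ≤ m) :
    X v m i (blk S m j) = YY S v (j * m + i) := by
  classical
  unfold X YY
  congr 1
  have : blk S m j ∈ E v m i ↔ ∀ k : Fin v.length, S (j * m + i + k.1) = v.get k := by
    simp only [E, Fintype.mem_piFinset, AL, Finset.mem_filter, Finset.mem_univ, true_and, blk]
    constructor
    · intro h1 k
      have := h1 ⟨i + k, by have := k.isLt; omega⟩ k rfl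
      rw [← this, add_assoc]
    · intro h1 p k hk
      rw [← h1 k, hk, add_assoc]
  simp only [this]

lemma good_count {b : ℕ} (hb : 2 ≤ b) (S : ℕ → Fin b) (v : List (Fin b)) (K : ℕ) (hv : v ≠ [])
    (ε : ℝ) (hε : 0 < ε) (hK : 4 * (v.length : ℝ) ≤ ε * (K + v.length : ℕ)) (N : ℕ)
    (hN : ε * N ≤ |(occCount S v N : ℝ) - 1 / (b : ℝ) ^ v.length * N|) (a : ℕ)
    (ha : a = ∑ j ∈ Finset.range (N / (K + v.length)),
      if blk S (K + v.length) j ∈ G v K (ε * (K + v.length : ℕ) / 2) then 1 else 0) :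
    ε * (N / (K + v.length) : ℕ) / 4 ≤ 1 + a := by
  set m := K + v.length with hm
  have hmpos : 0 < m := by have := List.length_pos_of_ne_nil hv; omega
  have hmR : (0 : ℝ) < m := by exact_mod_cast hmpos
  set J := N / m with hJ
  rw [← sum_YY] at hN
  have h1 := rem_sum (YY S v) (abs_YY_le hb S v) m N hmpos
  have h2 := block_sum (YY S v) (abs_YY_le hb S v) K v.length J
  rw [← hm] at h2
  have h3 : ∀ j ∈ Finset.range J, ((v.length : ℝ) + |∑ i ∈ Finset.range K, YY S v (j * m + i)|) ≤
      ε * m / 4 + (ε * m / 2 + m * ((if blk S m j ∈ G v K (ε * m / 2) then 1 else 0 : ℕ) : ℝ)) := by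
    intro j _
    have e : ∑ i ∈ Finset.range K, YY S v (j * m + i) = dev v K (blk S m j) := by
      unfold dev
      refine Finset.sum_congr rfl fun i hi => ?_
      rw [Finset.mem_range] at hi
      rw [X_blk S v _ i j (by omega)]
    have hle : |dev v K (blk S m j)| ≤ m := by
      rw [← e]
      refine (Finset.abs_sum_le_sum_abs _ _).trans ?_
      have := Finset.sum_le_card_nsmul (Finset.range K) (fun x => |YY S v (j * m + x)|) 1
        (fun x _ => abs_YY_le hb S v _)
      simp only [Finset.card_range, nsmul_eq_mul, mul_one] at this
      refine this.trans ?_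
      rw [hm]; push_cast
      have : (0 : ℝ) ≤ v.length := by positivity
      linarith
    rw [e]
    have hp : 0 ≤ ε * m := by positivity
    split_ifs with hG
    · push_cast; linarith
    · have : |dev v K (blk S m j)| < ε * m / 2 := by
        by_contra! hc
        exact hG (Finset.mem_filter.2 ⟨Finset.mem_univ _, hc⟩)
      push_cast; linarith
  have h4 := h2.trans (Finset.sum_le_sum h3)
  rw [Finset.sum_add_distrib, Finset.sum_add_distrib, ← Finset.mul_sum] at h4
  simp only [Finset.sum_const, Finset.card_range, nsmul_eq_mul] at h4
  rw [← Nat.cast_sum, ← ha] at h4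
  have h5 : (J : ℝ) * m ≤ N := by exact_mod_cast Nat.div_mul_le_self N m
  have h6 : ε * (J * m) ≤ ε * N := by gcongr
  have h7 : m * (ε * J / 4) ≤ m * (1 + (a : ℝ)) := by linarith
  exact le_of_mul_le_mul_left h7 hmR

lemma exists_code {b : ℕ} (hb : 2 ≤ b) (m r : ℕ) (hr : r ≤ m) (G : Finset (Fin m → Fin b))
    (hG : G.card ≤ b ^ r) : ∃ T : FST (Fin b), ∀ us : List (Fin m → Fin b),
      ∃ c : (Fin m → Fin b) → List (Fin b), T.out (us.flatMap c) = us.flatMap (fun u => List.ofFn u) ∧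
      ∀ u, (c u).length = if u ∈ G then r + 1 else m + 1 := by
  classical
  have : Nonempty ({u // u ∈ G} ↪ (Fin r → Fin b)) := by
    apply Function.Embedding.nonempty_of_card_le
    simpa using hG
  obtain ⟨e⟩ := this
  let c : (Fin m → Fin b) → List (Fin b) := fun u =>
    if h : u ∈ G then ⟨0, by omega⟩ :: List.ofFn (e ⟨u, h⟩) else ⟨1, by omega⟩ :: List.ofFn u
  have hlen : ∀ u, (c u).length = if u ∈ G then r + 1 else m + 1 := by
    intro u
    simp only [c]
    split_ifs <;> simp
  obtain ⟨T, hT⟩ := exists_decoder c (fun u => List.ofFn u) (m + 1)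
    (fun u => by rw [hlen]; split_ifs <;> omega)
    (fun u h => by have := hlen u; rw [h] at this; split_ifs at this)
    (by
      intro u u' h
      by_cases hu : u ∈ G <;> by_cases hu' : u' ∈ G
      · have h1 := h.eq_of_length (by rw [hlen, hlen, if_pos hu, if_pos hu'])
        simp only [c, dif_pos hu, dif_pos hu', List.cons.injEq, true_and] at h1
        have := e.injective (List.ofFn_injective h1)
        simpa using this
      · simp only [c, dif_pos hu, dif_neg hu', List.cons_prefix_cons] at h
        exact absurd h.1 (by simp)
      · simp only [c, dif_neg hu, dif_pos hu', List.cons_prefix_cons] at h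
        exact absurd h.1 (by simp)
      · have h1 := h.eq_of_length (by rw [hlen, hlen, if_neg hu, if_neg hu'])
        simp only [c, dif_neg hu, dif_neg hu', List.cons.injEq, true_and] at h1
        exact List.ofFn_injective h1)
  exact ⟨T, fun us => ⟨c, hT us, hlen⟩⟩

lemma backward {b : ℕ} (hb : 2 ≤ b) (S : ℕ → Fin b) (hS : ¬ endsBm1 b S)
    (hdim : dimFSb b (realSeq b S) = 1) : Nrm S := by
  classical
  have hb2 : (1 : ℝ) < b := by exact_mod_cast hb
  intro v hv
  by_contra hnt
  rw [Metric.tendsto_atTop] at hnt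
  push Not at hnt
  obtain ⟨ε, hε, hfreq⟩ := hnt
  have hl : 0 < v.length := List.length_pos_of_ne_nil hv
  obtain ⟨g, hg⟩ := exists_nat_gt (12 / ε)
  rw [div_lt_iff₀ hε] at hg
  obtain ⟨K0, hK0⟩ := exists_nat_gt (4 * (v.length : ℝ) / ε + 8 * v.length * (b : ℝ) ^ g / ε ^ 2)
  set K := K0 + g with hKdef
  set m := K + v.length with hm
  have hKm : (K0 : ℝ) ≤ m := by
    have : K0 ≤ m := by omega
    exact_mod_cast this
  have hmpos : (0 : ℝ) < m := by
    have : 0 < m := by omega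
    exact_mod_cast this
  have hA0 : 0 ≤ 4 * (v.length : ℝ) / ε := by positivity
  have hB0 : 0 ≤ 8 * v.length * (b : ℝ) ^ g / ε ^ 2 := by positivity
  have hA : 4 * (v.length : ℝ) ≤ ε * m := by
    rw [mul_comm ε, ← div_le_iff₀ hε]; linarith
  have hB : 8 * v.length * (b : ℝ) ^ g ≤ m * ε ^ 2 := by
    rw [← div_le_iff₀ (by positivity)]; linarith
  have hcardR : ((G v K (ε * m / 2)).card : ℝ) ≤ (b : ℝ) ^ (m - g) := by
    have h1 : (G v K (ε * m / 2)).card * (ε * m / 2) ^ 2 ≤ 2 * v.length * K * (b : ℝ) ^ m :=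
      card_G hb v K (ε * m / 2) (by positivity)
    have hKm' : (K : ℝ) ≤ m := by rw [hm]; push_cast; linarith [(Nat.cast_nonneg v.length : (0:ℝ) ≤ _)]
    have e : (b : ℝ) ^ m = b ^ (m - g) * b ^ g := by rw [← pow_add]; congr 1; omega
    have hpos : (0 : ℝ) < (b : ℝ) ^ (m - g) := by positivity
    have h2 : 2 * v.length * K * (b : ℝ) ^ m ≤ b ^ (m - g) * (ε * m / 2) ^ 2 := by
      have h3 : 2 * v.length * K * (b : ℝ) ^ m ≤ 2 * v.length * m * (b : ℝ) ^ m := by gcongr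
      refine h3.trans ?_
      have h4 : (m * (b : ℝ) ^ (m - g) / 4) * (8 * v.length * (b : ℝ) ^ g) ≤
        (m * (b : ℝ) ^ (m - g) / 4) * (m * ε ^ 2) := by gcongr
      rw [e]
      linarith
    exact le_of_mul_le_mul_right (h1.trans h2) (by positivity)
  have hcard : (G v K (ε * m / 2)).card ≤ b ^ (m - g) := by exact_mod_cast hcardR
  obtain ⟨T, hT⟩ := exists_code hb m (m - g) (by omega) (G v K (ε * m / 2)) hcard
  have hle : dimFSb b (realSeq b S) ≤ ENNReal.ofReal ((m - 1) / m) := by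
    refine (iInf_le _ T).trans ?_
    have hm1 : (1 : ℝ) ≤ m := by
      have : 1 ≤ m := by omega
      exact_mod_cast this
    refine liminf_le hb _ T _ (div_nonneg (by linarith) hmpos.le) ?_
    rw [frequently_atTop]
    intro n0
    obtain ⟨N, hN0, hN⟩ := hfreq (m * (n0 + g + 1))
    set J := N / m with hJ
    have hmn : 0 < m := by omega
    have hJ0 : n0 + g + 1 ≤ J := by
      rw [hJ, Nat.le_div_iff_mul_le hmn, mul_comm]; exact hN0
    have hNpos : (0 : ℝ) < N := by
      have h1 : 0 < m * (n0 + g + 1) := by positivity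
      have : 0 < N := by omega
      exact_mod_cast this
    refine ⟨J * m, by nlinarith, ?_⟩
    obtain ⟨c, hc, hclen⟩ := hT ((List.range J).map (blk S m))
    refine ⟨((List.range J).map (blk S m)).flatMap c, ?_, ?_⟩
    · rw [hc, blocks]
      exact pre_close b hb _ S hS
    · rw [flat_len]
      have hN' : ε * N ≤ |(occCount S v N : ℝ) - 1 / (b : ℝ) ^ v.length * N| := by
        rw [Real.dist_eq] at hN
        have h3 : (occCount S v N : ℝ) - 1 / (b : ℝ) ^ v.length * N =
          ((occCount S v N : ℝ) / N - 1 / (b : ℝ) ^ v.length) * N := by field_simp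
        rw [h3, abs_mul, abs_of_pos hNpos]
        gcongr
      set a := ∑ j ∈ Finset.range J, if blk S m j ∈ G v K (ε * m / 2) then 1 else 0 with ha
      have hgc : ε * J / 4 ≤ 1 + a := good_count hb S v K hv ε hε hA N hN' a ha
      have hsum : ∑ j ∈ Finset.range J, (c (blk S m j)).length + g * a = J * (m + 1) := by
        rw [ha, Finset.mul_sum, ← Finset.sum_add_distrib]
        rw [Finset.sum_congr rfl (g := fun _ => m + 1)]
        · simp
        · intro j _
          rw [hclen]
          split_ifs <;> omega
      have hsumR : ((∑ j ∈ Finset.range J, (c (blk S m j)).length : ℕ) : ℝ) + g * a = J * (m + 1) := by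
        exact_mod_cast hsum
      have hJg : (g : ℝ) ≤ J := by
        have : g ≤ J := by omega
        exact_mod_cast this
      have hg0 : (0 : ℝ) ≤ g := by positivity
      have h8 : g * (ε * J / 4) ≤ g * (1 + (a : ℝ)) := by gcongr
      have h9 : 12 * (J : ℝ) ≤ g * ε * J := by gcongr
      have h10 : ((m : ℝ) - 1) / m * ((J * m : ℕ) : ℝ) = J * (m - 1) := by
        push_cast; field_simp
      rw [h10]
      nlinarith
  rw [hdim, ← ENNReal.ofReal_one, ENNReal.ofReal_le_ofReal_iff'] at hle
  have h1 : ((m : ℝ) - 1) / m < 1 := by rw [div_lt_one hmpos]; linarith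
  rcases hle with h | h <;> linarith

end NormalAux

/-- x is b-normal iff dim_FS^b(x) = 1. -/
theorem normal_iff_dimFSb_eq_one (b : ℕ) (hb : 2 ≤ b) (x : ℝ) (hx : x ∈ Set.Ico (0:ℝ) 1)
    (S : ℕ → Fin b) (hS : realSeq b S = x) (hS' : ¬ endsBm1 b S) :
    (∀ w : List (Fin b), w ≠ [] →
      Filter.Tendsto (fun N : ℕ => (occCount S w N : ℝ) / (N : ℝ)) Filter.atTop
        (nhds (1 / (b:ℝ) ^ w.length)))
    ↔ dimFSb b x = 1 := by 
  subst hS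
  exact ⟨fun h => NormalAux.forward hb S hS' h, fun h => NormalAux.backward hb S hS' h⟩
end

section
/- For every set A ⊆ [0,1), the Hausdorff dimension of A equals the minimum over all separator enumerators f of the f-enumerator finite-state dimension of A: dim_H(A) = min_f dim_FS^f(A). Moreover the minimum is attained by some f : {0,1}* → D_2 mapping into the dyadic rationals. -/
open Filter Set
open scoped ENNReal

open MeasureTheory Topology

lemma aux_KprecF_lt {σ : Type} (T : FST σ) (f : List σ → ℝ) (δ x : ℝ) (c s : ℝ≥0∞) (hc : c ≠ ⊤)
    (h : (KprecF T f δ x : ℝ≥0∞) / c < s) :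
    ∃ π : List σ, |f (T.out π) - x| < δ ∧ ((π.length : ℕ) : ℝ≥0∞) / c < s := by
  have hK : KprecF T f δ x ≠ ⊤ := by
    intro h0
    rw [h0] at h
    simp [ENNReal.top_div, hc] at h
  unfold KprecF at hK h
  have hne : {k : ℕ∞ | ∃ w : List σ, |f w - x| < δ ∧ Kfst T w = k}.Nonempty := by
    by_contra h0
    rw [Set.not_nonempty_iff_eq_empty] at h0
    rw [h0] at hK
    simp at hK
  obtain ⟨w, hw, hk⟩ := csInf_mem hne
  rw [← hk] at hK h
  unfold Kfst at hK h
  have hne2 : {k : ℕ∞ | ∃ π : List σ, T.out π = w ∧ (π.length : ℕ∞) = k}.Nonempty := by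
    by_contra h0
    rw [Set.not_nonempty_iff_eq_empty] at h0
    rw [h0] at hK
    simp at hK
  obtain ⟨π, hπ, hk2⟩ := csInf_mem hne2
  rw [← hk2] at h
  exact ⟨π, by rw [hπ]; exact hw, by simpa using h⟩

lemma aux_tsum {σ : Type} [Fintype σ] (g : ℕ → ℝ≥0∞) :
    ∑' π : List σ, g π.length = ∑' n, (Fintype.card σ : ℝ≥0∞) ^ n * g n := by
  rw [← (Equiv.sigmaFiberEquiv (List.length : List σ → ℕ)).tsum_eq, ENNReal.tsum_sigma']
  congr 1
  ext n
  have : ∀ b : {w : List σ // w.length = n},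
      g ((Equiv.sigmaFiberEquiv (List.length : List σ → ℕ)) ⟨n, b⟩).length = g n := by
    intro b
    simp [Equiv.sigmaFiberEquiv, b.2]
  simp_rw [this]
  have e : Fintype {w : List σ // w.length = n} := inferInstanceAs (Fintype (List.Vector σ n))
  rw [tsum_fintype, Finset.sum_const, Finset.card_univ]
  have : Fintype.card {w : List σ // w.length = n} = Fintype.card σ ^ n := by
    rw [← card_vector]
    exact Fintype.card_congr (Equiv.refl _)
  rw [this]
  simp

lemma aux_part1 (A : Set ℝ) (σ : Type) [Fintype σ] (f : List σ → ℝ) :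
    dimH A ≤ dimFSfSet f A := by
  unfold dimFSfSet
  refine le_iInf fun T => ?_
  by_contra hlt
  push Not at hlt
  obtain ⟨s', hs1, hs2⟩ := ENNReal.lt_iff_exists_nnreal_btwn.1 hlt
  obtain ⟨s, hs3, hs4⟩ := ENNReal.lt_iff_exists_nnreal_btwn.1 hs2
  have hs3 : s' < s := by exact_mod_cast hs3
  have hs'0 : 0 < s' := by
    have := lt_of_le_of_lt (zero_le) hs1
    exact_mod_cast this
  set C : Set ℝ := Set.range (fun π : List σ => f (T.out π)) with hC
  have hCc : C.Countable := Set.countable_range _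
  have hfreq : ∀ x ∈ A, ∃ᶠ δ in 𝓝[>] (0:ℝ), ∃ π : List σ, |f (T.out π) - x| < δ ∧
      ((π.length : ℕ) : ℝ≥0∞) / ENNReal.ofReal (Real.logb (Fintype.card σ) (1/δ)) < s' := by
    intro x hx
    have h1 : Filter.liminf (fun δ : ℝ =>
      (KprecF T f δ x : ℝ≥0∞) / ENNReal.ofReal (Real.logb (Fintype.card σ) (1/δ)))
      (𝓝[>] 0) < s' := lt_of_le_of_lt (le_iSup₂ (f := fun x (_ : x ∈ A) => Filter.liminf (fun δ : ℝ =>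
      (KprecF T f δ x : ℝ≥0∞) / ENNReal.ofReal (Real.logb (Fintype.card σ) (1/δ)))
      (𝓝[>] 0)) x hx) hs1
    have h2 := Filter.frequently_lt_of_liminf_lt (by isBoundedDefault) h1
    exact h2.mono fun δ hδ => aux_KprecF_lt T f δ x _ _ ENNReal.ofReal_ne_top hδ
  have hfreq2 : ∀ x ∈ A \ C, ∀ N : ℕ, ∃ δ : ℝ, 0 < δ ∧ δ < 1 ∧ ∃ π : List σ, N ≤ π.length ∧
      |f (T.out π) - x| < δ ∧
      ((π.length : ℕ) : ℝ≥0∞) / ENNReal.ofReal (Real.logb (Fintype.card σ) (1/δ)) < s' := by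
    rintro x ⟨hx, hxC⟩ N
    have h1 : ∀ᶠ δ in 𝓝[>] (0:ℝ), ∀ π ∈ {π : List σ | π.length < N}, δ < |f (T.out π) - x| := by
      rw [Filter.eventually_all_finite (List.finite_length_lt σ N)]
      intro π _
      refine eventually_nhdsWithin_of_eventually_nhds (eventually_lt_nhds ?_)
      rw [abs_pos, sub_ne_zero]
      exact fun h => hxC ⟨π, h⟩
    have h2 : ∀ᶠ δ in 𝓝[>] (0:ℝ), δ < 1 :=
      eventually_nhdsWithin_of_eventually_nhds (eventually_lt_nhds one_pos)
    have h3 : ∀ᶠ δ in 𝓝[>] (0:ℝ), 0 < δ := self_mem_nhdsWithin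
    obtain ⟨δ, ⟨π, h4, h5⟩, h6, h7, h8⟩ := ((hfreq x hx).and_eventually (h1.and (h2.and h3))).exists
    refine ⟨δ, h8, h7, π, ?_, h4, h5⟩
    by_contra hlen
    push Not at hlen
    exact absurd (h6 π hlen) (by linarith)
  have hdim : dimH A ≤ dimH (A \ C) := by
    calc dimH A ≤ dimH (A \ C ∪ C) := dimH_mono (by simp)
      _ = _ := by rw [dimH_union, hCc.dimH_zero]; simp
  have hsd : (s : ℝ≥0∞) < dimH (A \ C) := lt_of_lt_of_le hs4 hdim
  refine absurd hsd (not_lt.2 ?_)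
  rcases le_or_gt (Fintype.card σ) 1 with hb | hb
  · have : A \ C = ∅ := by
      rw [Set.eq_empty_iff_forall_notMem]
      intro x hx
      obtain ⟨δ, _, _, π, hl, _, h⟩ := hfreq2 x hx 1
      have : Real.logb (Fintype.card σ) (1/δ) = 0 := by
        unfold Real.logb
        interval_cases Fintype.card σ <;> simp
      rw [this, ENNReal.ofReal_zero, ENNReal.div_zero (by
        have : π.length ≠ 0 := by omega
        exact_mod_cast this)] at h
      exact absurd h (by simp)
    rw [this]; simp
  set b : ℝ := (Fintype.card σ : ℝ) with hbdef
  have hb1 : 1 < b := by rw [hbdef]; exact_mod_cast hb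
  have hb0 : 0 < b := by linarith
  have hs'r : (0:ℝ) < s' := by exact_mod_cast hs'0
  have hsr : (s':ℝ) < s := by exact_mod_cast hs3
  have hs0 : (0:ℝ) < s := hs'r.trans hsr
  set p : ℝ := b ^ (-(1 / (s':ℝ))) with hp
  have hp0 : 0 < p := Real.rpow_pos_of_pos hb0 _
  have hp1 : p < 1 := Real.rpow_lt_one_of_one_lt_of_neg hb1 (by
    have : 0 < 1 / (s':ℝ) := by positivity
    linarith)
  have hbp : b * p ^ (s:ℝ) < 1 := by
    rw [hp, ← Real.rpow_mul hb0.le]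
    nth_rewrite 1 [← Real.rpow_one b]
    rw [← Real.rpow_add hb0]
    apply Real.rpow_lt_one_of_one_lt_of_neg hb1
    have : 1 < (s:ℝ) / s' := (one_lt_div hs'r).2 hsr
    have e : -(1 / (s':ℝ)) * s = - (s / s') := by ring
    rw [e]; linarith
  apply dimH_le_of_hausdorffMeasure_ne_top
  let t : ∀ N : ℕ, {π : List σ // N ≤ π.length} → Set ℝ :=
    fun N π => Metric.ball (f (T.out π.1)) (p ^ π.1.length)
  have hcov : ∀ N, A \ C ⊆ ⋃ i, t N i := by
    intro N x hx
    obtain ⟨δ, h0, h1, π, hl, h2, h3⟩ := hfreq2 x hx N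
    refine Set.mem_iUnion.2 ⟨⟨π, hl⟩, ?_⟩
    simp only [t, Metric.mem_ball]
    rw [dist_comm, Real.dist_eq]
    refine lt_of_lt_of_le h2 ?_
    have hL : 0 < Real.logb b (1/δ) := Real.logb_pos hb1 (by rw [lt_div_iff₀ h0]; linarith)
    have h4 : (π.length : ℝ) < s' * Real.logb b (1/δ) := by
      rw [ENNReal.div_lt_iff (Or.inl (by simpa using hL)) (Or.inl ENNReal.ofReal_ne_top)] at h3
      have : ((π.length : ℕ) : ℝ≥0∞) = ENNReal.ofReal (π.length : ℝ) := by simp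
      rw [this, ← ENNReal.ofReal_coe_nnreal, ← ENNReal.ofReal_mul hs'r.le,
        ENNReal.ofReal_lt_ofReal_iff (by positivity)] at h3
      exact h3
    have h5 : (π.length : ℝ) / s' ≤ Real.logb b (1/δ) := by
      rw [div_le_iff₀ hs'r]; linarith
    rw [Real.le_logb_iff_rpow_le hb1 (by positivity)] at h5
    have h6 : p ^ π.length = (b ^ ((π.length : ℝ) / s'))⁻¹ := by
      rw [hp, ← Real.rpow_natCast, ← Real.rpow_mul hb0.le, ← Real.rpow_neg hb0.le]
      congr 1; ring
    rw [h6, le_inv_comm₀ h0 (by positivity)]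
    simpa using h5
  have hdiam : ∀ N i, Metric.ediam (t N i) ≤ ENNReal.ofReal (2 * p ^ i.1.length) := by
    intro N i
    simp only [t, Real.ball_eq_Ioo, Real.ediam_Ioo]
    apply le_of_eq; congr 1; ring
  have hmain := Measure.hausdorffMeasure_le_liminf_tsum (s:ℝ) (A \ C) (l := atTop)
    (fun N : ℕ => ENNReal.ofReal (2 * p ^ N)) (by
      rw [← ENNReal.ofReal_zero]
      apply ENNReal.tendsto_ofReal
      simpa using (tendsto_pow_atTop_nhds_zero_of_lt_one hp0.le hp1).const_mul 2) t
    (Eventually.of_forall fun N i => (hdiam N i).trans (ENNReal.ofReal_le_ofReal (by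
      have := pow_le_pow_of_le_one hp0.le hp1.le i.2
      linarith))) (Eventually.of_forall hcov)
  set K : ℝ≥0∞ := ∑' π : List σ, ENNReal.ofReal ((2 * p ^ π.length) ^ (s:ℝ)) with hK
  have hKt : K ≠ ⊤ := by
    rw [hK, aux_tsum (fun n => ENNReal.ofReal ((2 * p ^ n) ^ (s:ℝ)))]
    have : ∀ n : ℕ, (Fintype.card σ : ℝ≥0∞) ^ n * ENNReal.ofReal ((2 * p ^ n) ^ (s:ℝ)) =
        ENNReal.ofReal (2 ^ (s:ℝ)) * (ENNReal.ofReal (b * p ^ (s:ℝ))) ^ n := by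
      intro n
      have e1 : (Fintype.card σ : ℝ≥0∞) = ENNReal.ofReal b := by simp [hbdef]
      rw [e1, ← ENNReal.ofReal_pow hb0.le, ← ENNReal.ofReal_mul (by positivity),
        ← ENNReal.ofReal_pow (by positivity), ← ENNReal.ofReal_mul (by positivity)]
      congr 1
      rw [Real.mul_rpow (by norm_num) (by positivity), mul_pow, Real.rpow_pow_comm hp0.le]
      ring
    simp_rw [this]
    rw [ENNReal.tsum_mul_left, ENNReal.tsum_geometric]
    refine ENNReal.mul_ne_top ENNReal.ofReal_ne_top ?_
    rw [ENNReal.inv_ne_top]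
    have : ENNReal.ofReal (b * p ^ (s:ℝ)) < 1 := by simpa using hbp
    exact (tsub_pos_of_lt this).ne'
  refine ne_top_of_le_ne_top hKt (hmain.trans ?_)
  apply Filter.liminf_le_of_frequently_le'
  apply Frequently.of_forall
  intro N
  calc ∑' i, Metric.ediam (t N i) ^ (s:ℝ)
      ≤ ∑' i : {π : List σ // N ≤ π.length}, ENNReal.ofReal ((2 * p ^ i.1.length) ^ (s:ℝ)) := by
        refine ENNReal.tsum_le_tsum fun i => ?_
        rw [← ENNReal.ofReal_rpow_of_pos (by positivity)]
        exact ENNReal.rpow_le_rpow (hdiam N i) hs0.le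
    _ ≤ K := ENNReal.tsum_comp_le_tsum_of_injective Subtype.val_injective
        (fun π : List σ => ENNReal.ofReal ((2 * p ^ π.length) ^ (s:ℝ)))

lemma realb_cons (a : Fin 2) (w : List (Fin 2)) :
    realb 2 (a :: w) = ((a : ℕ) + realb 2 w) / 2 := by
  unfold realb
  simp only [List.length_cons]
  rw [Fin.sum_univ_succ, add_div, Finset.sum_div]
  congr 1
  · simp
  · refine Finset.sum_congr rfl fun i _ => ?_
    simp [pow_succ]
    ring

lemma realb_mem (w : List (Fin 2)) : realb 2 w ∈ Set.Ico (0:ℝ) 1 := by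
  induction w with
  | nil => simp [realb]
  | cons a w ih =>
    rw [realb_cons]
    obtain ⟨h1, h2⟩ := ih
    fin_cases a <;> constructor <;> simp <;> linarith

lemma realb_approx (n : ℕ) : ∀ x ∈ Set.Ico (0:ℝ) 1, ∃ w, |realb 2 w - x| ≤ (1/2)^n := by
  induction n with
  | zero =>
    rintro x ⟨h1, h2⟩
    refine ⟨[], ?_⟩
    simp [realb, abs_of_nonneg h1, h2.le]
  | succ n ih =>
    rintro x ⟨h1, h2⟩
    rcases lt_or_ge x (1/2) with h | h
    · obtain ⟨w, hw⟩ := ih (2 * x) ⟨by linarith, by linarith⟩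
      refine ⟨0 :: w, ?_⟩
      rw [realb_cons, pow_succ]
      rw [abs_le] at hw ⊢
      constructor <;> simp at hw ⊢ <;> linarith
    · obtain ⟨w, hw⟩ := ih (2 * x - 1) ⟨by linarith, by linarith⟩
      refine ⟨1 :: w, ?_⟩
      rw [realb_cons, pow_succ]
      rw [abs_le] at hw ⊢
      constructor <;> simp at hw ⊢ <;> linarith

lemma realb_approx' (x : ℝ) (hx : x ∈ Set.Ico (0:ℝ) 1) (ε : ℝ) (hε : 0 < ε) :
    ∃ w, |realb 2 w - x| < ε := by
  obtain ⟨n, hn⟩ := exists_pow_lt_of_lt_one hε (by norm_num : (1/2:ℝ) < 1)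
  obtain ⟨w, hw⟩ := realb_approx n x hx
  exact ⟨w, hw.trans_lt hn⟩

lemma aux_cover (A : Set ℝ) (hA : A ⊆ Set.Ico (0:ℝ) 1) (s : ℝ) (hs : 0 < s)
    (hd : dimH A < ENNReal.ofReal s) (ε : ℝ≥0∞) (hε : 0 < ε) :
    ∃ (c : ℕ → List (Fin 2)) (ρ : ℕ → ℝ), (∀ n, 0 < ρ n) ∧
      (∑' n, ENNReal.ofReal (ρ n ^ s)) ≤ ε ∧ ∀ x ∈ A, ∃ n, |realb 2 (c n) - x| < ρ n := by
  have h0 : Measure.hausdorffMeasure s A = 0 := by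
    have := hausdorffMeasure_of_dimH_lt (s := A) (d := s.toNNReal) hd
    rwa [Real.coe_toNNReal s hs.le] at this
  set D : ℝ≥0∞ := ENNReal.ofReal (2 ^ s) with hD
  have hD0 : D ≠ 0 := by simp [hD]; positivity
  have hDt : D ≠ ⊤ := ENNReal.ofReal_ne_top
  set η : ℝ≥0∞ := ε / D / 2 with hη
  have hη0 : η ≠ 0 := by
    simp [hη, hε.ne', hDt]
  rw [Measure.hausdorffMeasure_apply] at h0
  have h1 := (le_iSup₂ (f := fun (r : ℝ≥0∞) (_ : 0 < r) => ⨅ (t : ℕ → Set ℝ) (_ : A ⊆ ⋃ n, t n)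
    (_ : ∀ n, Metric.ediam (t n) ≤ r), ∑' n, ⨆ _ : (t n).Nonempty, Metric.ediam (t n) ^ s)
      (1:ℝ≥0∞) one_pos).trans h0.le
  have h2 := lt_of_le_of_lt h1 (pos_iff_ne_zero.2 hη0)
  simp only [iInf_lt_iff] at h2
  obtain ⟨t, hcov, hdiam, hsum⟩ := h2
  obtain ⟨e, he0, hesum⟩ := ENNReal.exists_pos_sum_of_countable' hη0 ℕ
  have hdf : ∀ n, Metric.ediam (t n) ≠ ⊤ := fun n => ne_top_of_le_ne_top ENNReal.one_ne_top (hdiam n)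
  have hef : ∀ n, e n ≠ ⊤ := by
    intro n h
    have := ENNReal.le_tsum (f := e) n
    rw [h] at this
    exact absurd hesum (by rw [top_le_iff.1 this]; simp)
  set v : ℕ → ℝ≥0∞ := fun n => Metric.ediam (t n) ^ s + e n with hv
  have hvt : ∀ n, v n ≠ ⊤ := fun n => by
    simp [hv, hef n, ENNReal.rpow_eq_top_iff, hdf n, hs.le]
  set r : ℕ → ℝ := fun n => ((v n) ^ (1/s)).toReal with hr
  have hvr : ∀ n, (v n) ^ (1/s) ≠ ⊤ := fun n =>
    ENNReal.rpow_ne_top_of_nonneg (by positivity) (hvt n)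
  have hdr : ∀ n, (Metric.ediam (t n)).toReal < r n := by
    intro n
    rw [hr]
    refine (ENNReal.toReal_lt_toReal (hdf n) (hvr n)).2 ?_
    rw [one_div, ENNReal.lt_rpow_inv_iff hs]
    exact ENNReal.lt_add_right (ENNReal.rpow_ne_top_of_nonneg hs.le (hdf n)) (he0 n).ne'
  have hr0 : ∀ n, 0 < r n := fun n => lt_of_le_of_lt ENNReal.toReal_nonneg (hdr n)
  have hc : ∀ n, ∃ w, ∀ x ∈ A, x ∈ t n → |realb 2 w - x| < 2 * r n := by
    intro n
    by_cases hne : (A ∩ t n).Nonempty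
    · obtain ⟨y, hy, hyt⟩ := hne
      obtain ⟨w, hw⟩ := realb_approx' y (hA hy) (r n) (hr0 n)
      refine ⟨w, fun x hx hxt => ?_⟩
      have h3 : dist y x ≤ (Metric.ediam (t n)).toReal := by
        rw [dist_edist]
        exact ENNReal.toReal_mono (hdf n) (Metric.edist_le_ediam_of_mem hyt hxt)
      rw [Real.dist_eq] at h3
      have := abs_sub_le (realb 2 w) y x
      linarith [hdr n]
    · exact ⟨[], fun x hx hxt => absurd ⟨x, hx, hxt⟩ hne⟩
  choose c hc using hc
  refine ⟨c, fun n => 2 * r n, fun n => by linarith [hr0 n], ?_, ?_⟩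
  · have h4 : ∀ n, ENNReal.ofReal ((2 * r n) ^ s) = D * v n := by
      intro n
      rw [Real.mul_rpow (by norm_num) (hr0 n).le, ENNReal.ofReal_mul (by positivity), hD]
      congr 1
      rw [← ENNReal.ofReal_rpow_of_pos (hr0 n), hr]
      simp only
      rw [ENNReal.ofReal_toReal (hvr n), ← ENNReal.rpow_mul, one_div_mul_cancel hs.ne',
        ENNReal.rpow_one]
    simp_rw [h4]
    rw [ENNReal.tsum_mul_left, hv, ENNReal.tsum_add]
    have h5 : ∑' n, Metric.ediam (t n) ^ s ≤ η := by
      refine le_trans (ENNReal.tsum_le_tsum fun n => ?_) hsum.le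
      rcases Set.eq_empty_or_nonempty (t n) with h | h
      · simp [h, hs]
      · simp [h]
    calc D * (_ + _) ≤ D * (η + η) := by gcongr
      _ = ε := by
        rw [hη, ENNReal.add_halves, ENNReal.mul_div_cancel hD0 hDt]
  · intro x hx
    obtain ⟨n, hn⟩ := Set.mem_iUnion.1 (hcov hx)
    exact ⟨n, hc n x hx hn⟩

lemma aux_code {ι : Type} (L : ι → ℕ) (h : ∑' i, ((2:ℝ≥0∞)⁻¹) ^ (L i) ≤ 1) :
    ∃ code : ι → List (Fin 2), Function.Injective code ∧ ∀ i, (code i).length = L i := by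
  have h2 : ∀ l, ∃ g : {i // L i = l} → List.Vector (Fin 2) l, Function.Injective g := by
    intro l
    have hF : ∀ F : Finset {i // L i = l}, F.card ≤ 2 ^ l := by
      intro F
      have h3 : ∑ i ∈ F, ((2:ℝ≥0∞)⁻¹) ^ l ≤ 1 := by
        calc ∑ i ∈ F, ((2:ℝ≥0∞)⁻¹) ^ l = ∑ i ∈ F, ((2:ℝ≥0∞)⁻¹) ^ (L i.1) :=
              Finset.sum_congr rfl fun i _ => by rw [i.2]
          _ ≤ ∑' i : {i // L i = l}, ((2:ℝ≥0∞)⁻¹) ^ (L i.1) := ENNReal.sum_le_tsum F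
          _ ≤ _ := ENNReal.tsum_comp_le_tsum_of_injective Subtype.val_injective
            (fun i => ((2:ℝ≥0∞)⁻¹) ^ (L i))
          _ ≤ 1 := h
      rw [Finset.sum_const, nsmul_eq_mul, ← ENNReal.inv_pow, ← div_eq_mul_inv,
        ENNReal.div_le_iff (by positivity) (by simp), one_mul] at h3
      exact_mod_cast h3
    have : Finite {i // L i = l} := by
      by_contra hinf
      rw [not_finite_iff_infinite] at hinf
      obtain ⟨F, hF2⟩ := Infinite.exists_subset_card_eq {i // L i = l} (2 ^ l + 1)
      have := hF F
      omega
    have := Fintype.ofFinite {i // L i = l}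
    obtain ⟨g⟩ := Function.Embedding.nonempty_of_card_le (α := {i // L i = l})
      (β := List.Vector (Fin 2) l) (by
        rw [card_vector]
        simpa using hF Finset.univ)
    exact ⟨g, g.injective⟩
  choose g hg using h2
  refine ⟨fun i => (g (L i) ⟨i, rfl⟩).1, ?_, fun i => (g (L i) ⟨i, rfl⟩).2⟩
  have key : ∀ l l' (i : {i // L i = l}) (j : {i // L i = l'}), l = l' →
      (g l i).1 = (g l' j).1 → i.1 = j.1 := by
    rintro l l' i j rfl h
    exact congrArg Subtype.val (hg l (Subtype.ext h))
  intro i j hij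
  refine key _ _ ⟨i, rfl⟩ ⟨j, rfl⟩ ?_ hij
  have h1 := (g (L i) ⟨i, rfl⟩).2
  have h2 := (g (L j) ⟨j, rfl⟩).2
  simp only at hij
  rw [← h1, ← h2, hij]

lemma aux_two (n : ℕ) : ((2:ℝ≥0∞)⁻¹) ^ n = ENNReal.ofReal (2 ^ (-(n : ℝ))) := by
  rw [← ENNReal.ofReal_rpow_of_pos (by norm_num), ENNReal.rpow_neg, ENNReal.rpow_natCast,
    ← ENNReal.inv_pow]
  simp

/-- the identity transducer -/
def idFST : FST (Fin 2) := ⟨1, fun q _ => q, fun _ a => [a], 0⟩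

lemma idFST_out (w : List (Fin 2)) : idFST.out w = w := by
  unfold FST.out
  generalize idFST.q0 = q
  induction w generalizing q with
  | nil => rfl
  | cons a w ih => 
    rw [FST.nuS, ih]; rfl

lemma idFST_KprecF (f : List (Fin 2) → ℝ) (δ x : ℝ) (w : List (Fin 2)) (h : |f w - x| < δ) :
    KprecF idFST f δ x ≤ (w.length : ℕ∞) := by
  have h1 : KprecF idFST f δ x ≤ Kfst idFST w := sInf_le ⟨w, h, rfl⟩
  refine h1.trans ?_
  exact sInf_le ⟨w, idFST_out w, rfl⟩

lemma aux_part2 (A : Set ℝ) (hA : A ⊆ Set.Ico (0:ℝ) 1) :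
    ∃ f : List (Fin 2) → ℝ, isSE f ∧ (∀ w, f w ∈ Set.range (realb 2)) ∧
      dimFSfSet f A ≤ dimH A := by
  have hd1 : dimH A ≤ 1 := (dimH_mono (Set.subset_univ A)).trans Real.dimH_univ.le
  have hdt : dimH A ≠ ⊤ := ne_top_of_le_ne_top ENNReal.one_ne_top hd1
  set d : ℝ := (dimH A).toReal with hd
  have hdA : dimH A = ENNReal.ofReal d := (ENNReal.ofReal_toReal hdt).symm
  have hd0 : 0 ≤ d := ENNReal.toReal_nonneg
  have hd1' : d ≤ 1 := by
    have := ENNReal.toReal_mono ENNReal.one_ne_top hd1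
    simpa using this
  set s : ℕ → ℝ := fun k => d + 1 / ((k:ℝ) + 1) with hsdef
  have hs1 : ∀ k : ℕ, 0 < 1 / ((k:ℝ) + 1) := fun k => by positivity
  have hs2 : ∀ k : ℕ, 1 / ((k:ℝ) + 1) ≤ 1 := fun k => by
    rw [div_le_one (by positivity)]
    have : (0:ℝ) ≤ k := by positivity
    linarith
  have hs0 : ∀ k, 0 < s k := fun k => by have := hs1 k; simp only [hsdef]; linarith
  have hs3 : ∀ k, s k ≤ 2 := fun k => by have := hs2 k; simp only [hsdef]; linarith
  have hcov := fun k => aux_cover A hA (s k) (hs0 k) (by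
    rw [hdA, ENNReal.ofReal_lt_ofReal_iff (hs0 k)]
    have := hs1 k
    simp only [hsdef]; linarith) (((2:ℝ≥0∞)⁻¹) ^ (k+1)) (by
      apply ENNReal.pow_pos; simp)
  choose c ρ hρ0 hρs hcov using hcov
  set a : ℕ → ℕ → ℝ := fun k n => Real.logb 2 (1 / ρ k n) with ha
  set L : ℕ × ℕ → ℕ := fun i => ⌈s i.1 * a i.1 i.2⌉₊ with hL
  have hρa : ∀ k n, ρ k n ^ (s k) = 2 ^ (-(s k * a k n)) := by
    intro k n
    have : ρ k n = 2 ^ (- a k n) := by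
      rw [Real.rpow_neg (by norm_num), ha]
      simp only
      rw [Real.rpow_logb (by norm_num) (by norm_num) (by have := hρ0 k n; positivity)]
      simp
    rw [this, ← Real.rpow_mul (by norm_num)]
    congr 1; ring
  have hsa : ∀ k n : ℕ, (k:ℝ) + 1 ≤ s k * a k n := by
    intro k n
    have h1 := (ENNReal.le_tsum (f := fun n => ENNReal.ofReal (ρ k n ^ s k)) n).trans (hρs k)
    have h2 : ((2:ℝ≥0∞)⁻¹) ^ (k+1) = ENNReal.ofReal (2 ^ (-((k:ℝ)+1))) := by
      rw [aux_two]; push_cast; rfl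
    rw [h2] at h1
    rw [hρa, ENNReal.ofReal_le_ofReal_iff (by positivity),
      Real.rpow_le_rpow_left_iff (by norm_num)] at h1
    linarith
  obtain ⟨code, hcinj, hclen⟩ := aux_code L (by
    calc ∑' i : ℕ × ℕ, ((2:ℝ≥0∞)⁻¹) ^ (L i)
        ≤ ∑' i : ℕ × ℕ, ENNReal.ofReal (ρ i.1 i.2 ^ s i.1) := by
          refine ENNReal.tsum_le_tsum fun i => ?_
          rw [hρa]
          rw [aux_two]
          apply ENNReal.ofReal_le_ofReal
          rw [Real.rpow_le_rpow_left_iff (by norm_num)]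
          have := Nat.le_ceil (s i.1 * a i.1 i.2)
          simp only [hL]; linarith
      _ = ∑' k, ∑' n, ENNReal.ofReal (ρ k n ^ s k) := ENNReal.tsum_prod'
      _ ≤ ∑' k : ℕ, ((2:ℝ≥0∞)⁻¹) ^ (k+1) := ENNReal.tsum_le_tsum hρs
      _ = 1 := ENNReal.tsum_geometric_add_one _ |>.trans (by
          rw [ENNReal.one_sub_inv_two, inv_inv]
          exact ENNReal.inv_mul_cancel (by norm_num) (by norm_num)))
  let g : List (Fin 2) → List (Fin 2) := fun w => match w with
    | [] => []
    | b :: w => if b = 1 then w else Function.extend code (fun i => c i.1 i.2) id w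
  have hg1 : ∀ w, g (1 :: w) = w := fun w => by simp [g]
  have hg0 : ∀ i, g (0 :: code i) = c i.1 i.2 := fun i => by
    simp [g, hcinj.extend_apply]
  refine ⟨fun w => realb 2 (g w), ⟨fun w => realb_mem _, ?_⟩, fun w => ⟨_, rfl⟩, ?_⟩
  · have h1 : Set.Ico (0:ℝ) 1 ⊆ closure (Set.range fun w => realb 2 (g w)) := by
      intro x hx
      rw [Metric.mem_closure_range_iff]
      intro ε hε
      obtain ⟨w, hw⟩ := realb_approx' x hx ε hε
      refine ⟨1 :: w, ?_⟩
      rw [hg1, dist_comm, Real.dist_eq]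
      exact hw
    have h2 := closure_minimal h1 isClosed_closure
    rw [closure_Ico (by norm_num)] at h2
    exact h2
  · unfold dimFSfSet
    refine (iInf_le _ idFST).trans (iSup₂_le fun x hx => ?_)
    choose m hm using fun k => hcov k x hx
    have hak : ∀ k : ℕ, ((k:ℝ) + 1) / 2 ≤ a k (m k) := by
      intro k
      have h1 := hsa k (m k)
      have h2 := hs3 k
      have h3 : 0 < a k (m k) := by
        have : 0 < s k * a k (m k) := by
          have : (0:ℝ) ≤ k := by positivity
          linarith
        exact (pos_iff_pos_of_mul_pos this).1 (hs0 k)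
      nlinarith
    have hak' : Tendsto (fun k => a k (m k)) atTop atTop := by
      refine tendsto_atTop_mono hak ?_
      refine Tendsto.atTop_div_const (by norm_num) ?_
      exact tendsto_atTop_add_const_right _ _ tendsto_natCast_atTop_atTop
    have hρe : ∀ k, ρ k (m k) = 2 ^ (- a k (m k)) := by
      intro k
      rw [Real.rpow_neg (by norm_num), ha]
      simp only
      rw [Real.rpow_logb (by norm_num) (by norm_num) (by have := hρ0 k (m k); positivity)]
      simp
    have hρt : Tendsto (fun k => ρ k (m k)) atTop (𝓝[>] 0) := by
      rw [tendsto_nhdsWithin_iff]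
      refine ⟨?_, Eventually.of_forall fun k => hρ0 k (m k)⟩
      simp_rw [hρe]
      exact (tendsto_rpow_atBot_of_base_gt_one 2 (by norm_num)).comp
        (tendsto_neg_atTop_atBot.comp hak')
    refine le_of_forall_gt fun e' he' => ?_
    obtain ⟨e, he1, he2⟩ := ENNReal.lt_iff_exists_nnreal_btwn.1 he'
    refine lt_of_le_of_lt ?_ he2
    have hed : d < e := by
      rw [hdA] at he1
      have := ENNReal.toReal_lt_toReal ENNReal.ofReal_ne_top ENNReal.coe_ne_top |>.2 he1
      simpa [hd0] using this
    apply Filter.liminf_le_of_frequently_le'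
    refine hρt.frequently (Eventually.frequently ?_)
    have hev : ∀ᶠ k : ℕ in atTop, 5 / ((e:ℝ) - d) ≤ (k:ℝ) :=
      tendsto_natCast_atTop_atTop.eventually_ge_atTop _
    filter_upwards [hev] with k hk
    rw [div_le_iff₀ (by linarith)] at hk
    have hK := idFST_KprecF (fun w => realb 2 (g w)) (ρ k (m k)) x (0 :: code (k, m k)) (by
      simp only [hg0]; exact hm k)
    have ha0 : 0 < a k (m k) := lt_of_lt_of_le (by positivity) (hak k)
    have hcard : Real.logb (Fintype.card (Fin 2)) (1 / ρ k (m k)) = a k (m k) := by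
      simp [ha]
    rw [hcard]
    rw [ENNReal.div_le_iff (by simpa using ha0) ENNReal.ofReal_ne_top]
    have hK2 : (KprecF idFST (fun w => realb 2 (g w)) (ρ k (m k)) x : ℝ≥0∞) ≤
        ((L (k, m k) + 1 : ℕ) : ℝ≥0∞) := by
      rw [List.length_cons, hclen] at hK
      have := ENat.toENNReal_le.2 hK
      simpa using this
    refine hK2.trans ?_
    rw [← ENNReal.ofReal_coe_nnreal, ← ENNReal.ofReal_mul e.coe_nonneg, ← ENNReal.ofReal_natCast]
    apply ENNReal.ofReal_le_ofReal
    have h1 : (L (k, m k) : ℝ) < s k * a k (m k) + 1 := by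
      apply Nat.ceil_lt_add_one
      exact mul_nonneg (hs0 k).le ha0.le
    push_cast
    have h2 : 2 ≤ ((e:ℝ) - s k) * a k (m k) := by
      have h3 : ((e:ℝ) - s k) * ((k:ℝ) + 1) = (e - d) * (k + 1) - 1 := by
        simp only [hsdef]; field_simp; ring
      have hk0 : (0:ℝ) ≤ k := by positivity
      have h4 : 4 ≤ ((e:ℝ) - s k) * ((k:ℝ) + 1) := by rw [h3]; nlinarith
      have h5 : 0 < (e:ℝ) - s k := by
        by_contra hneg
        push Not at hneg
        nlinarith
      nlinarith [hak k]
    nlinarith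

/-- point-to-set principle: dim_H(A) = min over SEs f of dim_FS^f(A),
attained by some f into the dyadic rationals. -/
theorem pointToSet_dimH_eq_min_dimFSf (A : Set ℝ) (hA : A ⊆ Set.Ico (0:ℝ) 1) :
    (∀ (σ : Type) [Fintype σ] (f : List σ → ℝ), isSE f → dimH A ≤ dimFSfSet f A) ∧
    (∃ f : List (Fin 2) → ℝ, isSE f ∧ (∀ w, f w ∈ Set.range (realb 2)) ∧
      dimFSfSet f A = dimH A) := by
  refine ⟨fun σ _ f _ => aux_part1 A σ f, ?_⟩
  obtain ⟨f, h1, h2, h3⟩ := aux_part2 A hA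
  exact ⟨f, h1, h2, le_antisymm h3 (aux_part1 A (Fin 2) f)⟩
end
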